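/- arXiv:2312.07841 — 6 statements merged into one kernel-verified Lean document; each statement's English description precedes it below -/
import Mathlib

section
/- Let C ≥ 2, N ≥ 1, p ≥ 1 be integers, let γ > 0 satisfy γ·(C−2) ≤ 2, and let E1, E2 ≥ 0 be reals. Then for any vectors w_1, …, w_C ∈ ℝ^p with ‖w_c‖₂ ≤ E1 for every c ∈ [C], and any vectors h_{i,c} ∈ ℝ^p (i ∈ [N], c ∈ [C]) with ‖h_{i,c}‖₂ ≤ E2, the average unhinged loss satisfies (1/(C·N)) · Σ_{i=1}^{N} Σ_{c=1}^{C} ( −⟨w_c, h_{i,c}⟩ + γ · Σ_{j≠c} ⟨w_j, h_{i,c}⟩ ) ≥ −(1+γ)·E1·E2. -/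
open scoped BigOperators
open RealInnerProductSpace

/-!
The loss of a feature `h` with label `c` is `-⟪v c, h⟫`, where `v c = (1 + γ) w c - γ ∑ j, w j`.
Hence, by Cauchy–Schwarz over all samples, it suffices to bound `∑ c, ‖v c‖²`. Expanding the square,
`∑ c, ‖v c‖² = (1 + γ)² ∑ c, ‖w c‖² - γ (2 (1 + γ) - C γ) ‖∑ c, w c‖²`,
and `γ (C - 2) ≤ 2` says precisely that the last term only decreases the sum.
-/

section InnerProductSpace

variable {ι E : Type*} [Fintype ι] [SeminormedAddCommGroup E] [InnerProductSpace ℝ E]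

lemma sum_real_inner_le_sqrt_mul_sqrt (u v : ι → E) :
    ∑ i, ⟪u i, v i⟫ ≤ √(∑ i, ‖u i‖ ^ 2) * √(∑ i, ‖v i‖ ^ 2) :=
  (Finset.sum_le_sum fun i _ => real_inner_le_norm (u i) (v i)).trans
    (Real.sum_mul_le_sqrt_mul_sqrt _ _ _)

lemma sum_norm_smul_sub_smul_sum_sq (a b : ℝ) (w : ι → E) :
    ∑ i, ‖a • w i - b • ∑ j, w j‖ ^ 2 =
      a ^ 2 * ∑ i, ‖w i‖ ^ 2 - b * (2 * a - Fintype.card ι * b) * ‖∑ j, w j‖ ^ 2 := by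
  set S := ∑ j, w j with hS
  have norm_sq_expand (i : ι) : ‖a • w i - b • S‖ ^ 2 =
      a ^ 2 * ‖w i‖ ^ 2 - 2 * a * b * ⟪w i, S⟫ + b ^ 2 * ‖S‖ ^ 2 := by
    simp only [norm_sub_sq_real, norm_smul, real_inner_smul_left, real_inner_smul_right, mul_pow,
      Real.norm_eq_abs, sq_abs]
    ring
  have sum_inner_self : ∑ i, ⟪w i, S⟫ = ‖S‖ ^ 2 := by
    rw [← sum_inner, ← hS, real_inner_self_eq_norm_sq]
  simp only [norm_sq_expand, Finset.sum_add_distrib, Finset.sum_sub_distrib, ← Finset.mul_sum,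
    sum_inner_self, Finset.sum_const, Finset.card_univ, nsmul_eq_mul]
  ring

end InnerProductSpace

section NormBounds

variable {ι κ E : Type*} [Fintype ι] [Fintype κ] [SeminormedAddGroup E] {R : ℝ}

lemma sum_norm_sq_le_card_mul_sq {u : ι → E} (hu : ∀ i, ‖u i‖ ≤ R) :
    ∑ i, ‖u i‖ ^ 2 ≤ Fintype.card ι * R ^ 2 := by
  rw [← nsmul_eq_mul]
  exact Finset.sum_le_card_nsmul _ _ _ fun i _ => pow_le_pow_left₀ (norm_nonneg _) (hu i) 2

lemma sum_sum_norm_sq_le_card_mul_card_mul_sq {u : κ → ι → E} (hu : ∀ i j, ‖u i j‖ ≤ R) :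
    ∑ i, ∑ j, ‖u i j‖ ^ 2 ≤ Fintype.card κ * Fintype.card ι * R ^ 2 := by
  rw [mul_assoc, ← nsmul_eq_mul]
  exact Finset.sum_le_card_nsmul _ _ _ fun i _ => sum_norm_sq_le_card_mul_sq (hu i)

end NormBounds

section UnhingedLoss

variable {ι κ E : Type*} [Fintype ι] [Fintype κ] [SeminormedAddCommGroup E]
  [InnerProductSpace ℝ E] {γ E₁ E₂ : ℝ}

/-- The bias-free unhinged loss `L_γ(x, c)` of a feature `x` with label `c`, for the class
prototypes `w`. The feature space may be any real inner product space. -/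
def unhingedLoss [DecidableEq ι] (γ : ℝ) (w : ι → E) (x : E) (c : ι) : ℝ :=
  -⟪w c, x⟫ + γ * ∑ j ∈ Finset.univ.erase c, ⟪w j, x⟫

/-- The effective prototype of the class `c`: the vector that represents the linear functional
`x ↦ -L_γ(x, c)`, see `unhingedLoss_eq_neg_inner`. -/
def effectivePrototype (γ : ℝ) (w : ι → E) (c : ι) : E :=
  (1 + γ) • w c - γ • ∑ j, w j

lemma unhingedLoss_eq_neg_inner [DecidableEq ι] (γ : ℝ) (w : ι → E) (x : E) (c : ι) :
    unhingedLoss γ w x c = -⟪effectivePrototype γ w c, x⟫ := by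
  rw [unhingedLoss, effectivePrototype, inner_sub_left, real_inner_smul_left, real_inner_smul_left,
    sum_inner, ← Finset.add_sum_erase _ _ (Finset.mem_univ c)]
  ring

lemma sum_norm_effectivePrototype_sq_le (hγ : 0 ≤ γ) (hγ2 : γ * ((Fintype.card ι : ℝ) - 2) ≤ 2)
    (w : ι → E) :
    ∑ c, ‖effectivePrototype γ w c‖ ^ 2 ≤ (1 + γ) ^ 2 * ∑ c, ‖w c‖ ^ 2 := by
  simp only [effectivePrototype, sum_norm_smul_sub_smul_sum_sq]
  have coeff_nonneg : 0 ≤ γ * (2 * (1 + γ) - Fintype.card ι * γ) :=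
    mul_nonneg hγ (by linarith)
  exact sub_le_self _ (mul_nonneg coeff_nonneg (sq_nonneg _))

lemma sum_inner_effectivePrototype_le (hγ : 0 ≤ γ) (hγ2 : γ * ((Fintype.card ι : ℝ) - 2) ≤ 2)
    (hE₁ : 0 ≤ E₁) (hE₂ : 0 ≤ E₂) {w : ι → E} {h : κ → ι → E}
    (hw : ∑ c, ‖w c‖ ^ 2 ≤ Fintype.card ι * E₁ ^ 2)
    (hh : ∑ i, ∑ c, ‖h i c‖ ^ 2 ≤ Fintype.card κ * Fintype.card ι * E₂ ^ 2) :
    ∑ i, ∑ c, ⟪effectivePrototype γ w c, h i c⟫ ≤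
      Fintype.card κ * Fintype.card ι * ((1 + γ) * E₁ * E₂) := by
  set n : ℝ := Fintype.card κ * Fintype.card ι with hn
  have n_nonneg : 0 ≤ n := by positivity
  have prototype_energy :
      ∑ _i : κ, ∑ c, ‖effectivePrototype γ w c‖ ^ 2 ≤ n * ((1 + γ) * E₁) ^ 2 := by
    rw [Finset.sum_const, Finset.card_univ, nsmul_eq_mul]
    calc Fintype.card κ * ∑ c, ‖effectivePrototype γ w c‖ ^ 2
        ≤ Fintype.card κ * ((1 + γ) ^ 2 * (Fintype.card ι * E₁ ^ 2)) := by
          gcongr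
          exact (sum_norm_effectivePrototype_sq_le hγ hγ2 w).trans (by gcongr)
      _ = n * ((1 + γ) * E₁) ^ 2 := by rw [hn]; ring
  calc ∑ i, ∑ c, ⟪effectivePrototype γ w c, h i c⟫
      ≤ √(∑ _i : κ, ∑ c, ‖effectivePrototype γ w c‖ ^ 2) * √(∑ i, ∑ c, ‖h i c‖ ^ 2) := by
        simpa only [Fintype.sum_prod_type] using
          sum_real_inner_le_sqrt_mul_sqrt (fun x : κ × ι => effectivePrototype γ w x.2)
            (fun x => h x.1 x.2)
    _ ≤ √(n * ((1 + γ) * E₁) ^ 2) * √(n * E₂ ^ 2) := by gcongr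
    _ = √n * √n * ((1 + γ) * E₁ * E₂) := by
        rw [Real.sqrt_mul n_nonneg, Real.sqrt_mul n_nonneg, Real.sqrt_sq (by positivity),
          Real.sqrt_sq hE₂]
        ring
    _ = n * ((1 + γ) * E₁ * E₂) := by rw [Real.mul_self_sqrt n_nonneg]

theorem unhinged_loss_lower_bound_general [DecidableEq ι] [Nonempty ι] [Nonempty κ]
    (hγ : 0 ≤ γ) (hγ2 : γ * ((Fintype.card ι : ℝ) - 2) ≤ 2) (hE₁ : 0 ≤ E₁) (hE₂ : 0 ≤ E₂)
    {w : ι → E} {h : κ → ι → E} (hw : ∑ c, ‖w c‖ ^ 2 ≤ Fintype.card ι * E₁ ^ 2)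
    (hh : ∑ i, ∑ c, ‖h i c‖ ^ 2 ≤ Fintype.card κ * Fintype.card ι * E₂ ^ 2) :
    -((1 + γ) * E₁ * E₂) ≤
      1 / ((Fintype.card ι : ℝ) * Fintype.card κ) * ∑ i, ∑ c, unhingedLoss γ w (h i c) c := by
  simp only [unhingedLoss_eq_neg_inner, Finset.sum_neg_distrib, mul_neg, neg_le_neg_iff]
  rw [one_div_mul_eq_div, div_le_iff₀' (by positivity), mul_comm (Fintype.card ι : ℝ)]
  exact sum_inner_effectivePrototype_le hγ hγ2 hE₁ hE₂ hw hh

end UnhingedLoss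

/-- **Lower bound for the average unhinged loss under norm constraints.**
For prototypes `w c` with `‖w c‖ ≤ E1` and features `h i c` with `‖h i c‖ ≤ E2`,
the average unhinged loss is at least `-(1+γ)·E1·E2`. -/
theorem unhinged_loss_lower_bound
    (C N p : ℕ) (hC : 2 ≤ C) (hN : 1 ≤ N) (hp : 1 ≤ p)
    (γ : ℝ) (hγ : 0 < γ) (hγ2 : γ * ((C : ℝ) - 2) ≤ 2)
    (E1 E2 : ℝ) (hE1 : 0 ≤ E1) (hE2 : 0 ≤ E2)
    (w : Fin C → EuclideanSpace ℝ (Fin p))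
    (h : Fin N → Fin C → EuclideanSpace ℝ (Fin p))
    (hw : ∀ c, ‖w c‖ ≤ E1)
    (hh : ∀ i c, ‖h i c‖ ≤ E2) :
    (1 / ((C : ℝ) * N)) *
      ∑ i : Fin N, ∑ c : Fin C,
        (-⟪w c, h i c⟫ + γ * ∑ j ∈ Finset.univ.erase c, ⟪w j, h i c⟫)
      ≥ -((1 + γ) * E1 * E2) := by
  have : Nonempty (Fin C) := ⟨⟨0, by omega⟩⟩
  have : Nonempty (Fin N) := ⟨⟨0, hN⟩⟩
  simpa only [Fintype.card_fin, unhingedLoss, ge_iff_le] using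
    unhinged_loss_lower_bound_general hγ.le (by rwa [Fintype.card_fin]) hE1 hE2
      (sum_norm_sq_le_card_mul_sq hw) (sum_sum_norm_sq_le_card_mul_card_mul_sq hh)
end

section
/- Fix integers C, N, p ≥ 1, a real γ, and ε ∈ {+1, −1}. Let W ∈ ℝ^{p×C} satisfy W·1_C = 0, and let H ∈ ℝ^{p×(CN)} be H = (ε/√N)·(W ⊗ 1_N^T), i.e., the column of H indexed by (c,i) equals (ε/√N) times the c-th column of W. Then W·M = (ε·(1+γ)/(C·√N))·H and H·M^T = (ε·(1+γ)/(C·√N))·W; in other words, (H, W) is an eigenvector of the block operator (H,W) ↦ (W·M, H·M^T) with eigenvalue ε·(1+γ)/(C·√N). -/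
/-!
With `G = (1 + γ) I - γ 1 1ᵀ`, the matrix `M` is `(CN)⁻¹` times `G` with every column repeated `N`
times. Repeating columns commutes with left multiplication, and pairing two matrices with repeated
columns only multiplies their pairing by `N`. Hence both `W M` and `H Mᵀ` reduce to `W G`, which is
`(1 + γ) W` because `W` annihilates the all-ones vector and so `1 1ᵀ`. The two equations share
one eigenvalue because `ε² = 1`.
-/

open scoped BigOperators Matrix

noncomputable section

/-- The matrix `M = (1/(CN))·((1+γ)·(I_C ⊗ 1_Nᵀ) − γ·1_C·1_{CN}ᵀ)`,
with columns indexed by pairs `(c', i) ∈ [C]×[N]`. -/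
def Mmat (C N : ℕ) (γ : ℝ) : Matrix (Fin C) (Fin C × Fin N) ℝ :=
  Matrix.of fun c ci => ((1 + γ) * (if c = ci.1 then 1 else 0) - γ) / ((C : ℝ) * N)

/-- `W ⊗ 1_Nᵀ`: the `p × (C·N)` matrix whose column indexed by `(c, i)` is the
`c`-th column of `W`. -/
def colRep {p C : ℕ} (N : ℕ) (W : Matrix (Fin p) (Fin C) ℝ) :
    Matrix (Fin p) (Fin C × Fin N) ℝ :=
  Matrix.of fun i ci => W i ci.1

section ClassBlock

variable {m n R : Type*} [DecidableEq n] [CommRing R]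

/-- The `n × n` matrix `(1 + γ) I - γ 1 1ᵀ`, which is the block of `C N · M` formed by the columns
`(c', i)` with a fixed sample index `i`. -/
def classBlock (n : Type*) [DecidableEq n] (γ : R) : Matrix n n R :=
  (1 + γ) • (1 : Matrix n n R) - γ • Matrix.vecMulVec 1 1

theorem classBlock_transpose (γ : R) : (classBlock n γ)ᵀ = classBlock n γ := by
  simp only [classBlock, Matrix.transpose_sub, Matrix.transpose_smul, Matrix.transpose_one,
    Matrix.transpose_vecMulVec]

theorem mul_classBlock_of_mulVec_one_eq_zero [Fintype n] {A : Matrix m n R} (hA : A *ᵥ 1 = 0)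
    (γ : R) : A * classBlock n γ = (1 + γ) • A := by
  simp only [classBlock, Matrix.mul_sub, Matrix.mul_smul, Matrix.mul_one, Matrix.mul_vecMulVec,
    hA, Matrix.zero_vecMulVec, smul_zero, sub_zero]

end ClassBlock

theorem submatrix_fst_mul_transpose_submatrix_fst {m n k ι R : Type*} [Fintype n] [Fintype ι]
    [NonUnitalNonAssocSemiring R] (A : Matrix m n R) (B : Matrix k n R) :
    A.submatrix id (Prod.fst : n × ι → n) * (B.submatrix id (Prod.fst : n × ι → n))ᵀ =
      Fintype.card ι • (A * Bᵀ) := by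
  ext i j
  simp only [Matrix.mul_apply, Matrix.transpose_apply, Matrix.submatrix_apply, id_eq,
    Fintype.sum_prod_type, Finset.sum_const, Finset.card_univ, Matrix.smul_apply, Finset.smul_sum]

section ColRep

variable {p q C : ℕ} (N : ℕ)

theorem colRep_smul (a : ℝ) (A : Matrix (Fin p) (Fin C) ℝ) :
    colRep N (a • A) = a • colRep N A :=
  rfl

theorem mul_colRep (A : Matrix (Fin p) (Fin q) ℝ) (B : Matrix (Fin q) (Fin C) ℝ) :
    A * colRep N B = colRep N (A * B) :=
  rfl

theorem colRep_mul_transpose_colRep (A : Matrix (Fin p) (Fin C) ℝ)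
    (B : Matrix (Fin q) (Fin C) ℝ) : colRep N A * (colRep N B)ᵀ = (N : ℝ) • (A * Bᵀ) := by
  rw [Nat.cast_smul_eq_nsmul]
  simpa only [Fintype.card_fin] using!
    submatrix_fst_mul_transpose_submatrix_fst (ι := Fin N) A B

end ColRep

section Mmat

theorem Mmat_eq_smul_colRep_classBlock (C N : ℕ) (γ : ℝ) :
    Mmat C N γ = ((C : ℝ) * N)⁻¹ • colRep N (classBlock (Fin C) γ) := by
  ext c ⟨c', i⟩
  simp [Mmat, colRep, classBlock, Matrix.one_apply, div_eq_inv_mul]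

variable {p C : ℕ} {W : Matrix (Fin p) (Fin C) ℝ}

theorem mul_Mmat_of_mulVec_one_eq_zero (hW : W *ᵥ 1 = 0) (N : ℕ) (γ : ℝ) :
    W * Mmat C N γ = ((1 + γ) / (C * N)) • colRep N W := by
  rw [Mmat_eq_smul_colRep_classBlock, Matrix.mul_smul, mul_colRep,
    mul_classBlock_of_mulVec_one_eq_zero hW, colRep_smul, smul_smul, inv_mul_eq_div]

theorem colRep_mul_transpose_Mmat_of_mulVec_one_eq_zero (hW : W *ᵥ 1 = 0) {N : ℕ}
    (hN : N ≠ 0) (γ : ℝ) :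
    colRep N W * (Mmat C N γ)ᵀ = ((1 + γ) / C) • W := by
  have hN' : (N : ℝ) ≠ 0 := Nat.cast_ne_zero.mpr hN
  rw [Mmat_eq_smul_colRep_classBlock, Matrix.transpose_smul, Matrix.mul_smul,
    colRep_mul_transpose_colRep, classBlock_transpose, mul_classBlock_of_mulVec_one_eq_zero hW,
    smul_smul, smul_smul]
  congr 1
  field_simp

end Mmat

/-- **Eigenvectors of the block operator from the subspace `E₁^ε`.**
If `W·1_C = 0` and `H = (ε/√N)·(W ⊗ 1_Nᵀ)`, then `(H, W)` is an eigenvector of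
`(H, W) ↦ (W·M, H·Mᵀ)` with eigenvalue `ε·(1+γ)/(C·√N)`. -/
theorem eigenvector_E1
    (C N p : ℕ) (hC : 1 ≤ C) (hN : 1 ≤ N) (hp : 1 ≤ p)
    (γ ε : ℝ) (hε : ε = 1 ∨ ε = -1)
    (W : Matrix (Fin p) (Fin C) ℝ)
    (hW : W *ᵥ (fun _ => (1 : ℝ)) = 0)
    (H : Matrix (Fin p) (Fin C × Fin N) ℝ)
    (hH : H = (ε / Real.sqrt N) • colRep N W) :
    W * Mmat C N γ = (ε * (1 + γ) / ((C : ℝ) * Real.sqrt N)) • H ∧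
    H * (Mmat C N γ)ᵀ = (ε * (1 + γ) / ((C : ℝ) * Real.sqrt N)) • W := by
  have hsqrt : √(N : ℝ) * √(N : ℝ) = N := Real.mul_self_sqrt N.cast_nonneg
  have hεε : ε * ε = 1 := mul_self_eq_one_iff.mpr hε
  subst hH
  constructor
  · rw [mul_Mmat_of_mulVec_one_eq_zero hW, smul_smul]
    congr 1
    calc (1 + γ) / (C * N) = (ε * ε) * (1 + γ) / (C * (√N * √N)) := by rw [hεε, hsqrt, one_mul]
      _ = ε * (1 + γ) / (C * √N) * (ε / √N) := by ring
  · rw [Matrix.smul_mul, colRep_mul_transpose_Mmat_of_mulVec_one_eq_zero hW (by lia), smul_smul,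
      div_mul_div_comm, mul_comm √(N : ℝ)]
end
end

section
/- Fix integers C, N, p ≥ 1 and let V = ℝ^{p×(CN)} × ℝ^{p×C}, with columns of the first factor indexed by pairs (c,i) ∈ [C]×[N]. Define the linear subspaces E1^ε = {(H,W) ∈ V : W·1_C = 0 and H = (ε/√N)·(W ⊗ 1_N^T)} for ε ∈ {+1,−1}; E2^ε = {((ε/√N)·h·1_{CN}^T, h·1_C^T) : h ∈ ℝ^p} for ε ∈ {+1,−1}; and E3 = {(H, 0) ∈ V : H·(I_C ⊗ 1_N) = 0}. Then: (a) whenever (H1,W1) and (H2,W2) belong to two distinct subspaces among E1^+, E1^−, E2^+, E2^−, E3, one has H1·H2^T + W1·W2^T = 0 (the p×p zero matrix), so the five subspaces are pairwise orthogonal with respect to the inner product ⟨(H,W),(H',W')⟩ = Tr(H·H'^T) + Tr(W·W'^T); (b) every (H,W) ∈ V is a sum of five elements, one from each of E1^+, E1^−, E2^+, E2^−, E3. -/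
/-!
Put `A = (1/√N) (I_C ⊗ 1_N)ᵀ`, so that `A Aᵀ = 1` and `W A = (1/√N) (W ⊗ 1_Nᵀ)`. The elements of
`E₁^ε` and `E₂^ε` are the points `(W (ε A), W)` of a graph, with `W 1_C = 0` for `E₁^ε` and
`W = h 1_Cᵀ` for `E₂^ε`. The identity `(V A) Hᵀ + V Wᵀ = V (H Aᵀ + W)ᵀ` gives all orthogonality
relations: two graph points with signs `ε`, `δ` pair to `(1 + ε δ) V Wᵀ`, which vanishes for
opposite signs, and for `E₁` against `E₂` because `V (h 1_Cᵀ)ᵀ = (V 1_C) hᵀ`; against `E₃` both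
terms of `H Aᵀ + W` vanish.

For the decomposition of `(H, W)`, take the graph points over `(W ± H Aᵀ)/2`. Their sum is
`(H Aᵀ A, W)`, and the remainder `(H - H Aᵀ A, 0)` lies in `E₃`. Splitting off the mean of the
columns writes each graph point as an element of `E₁^ε` plus one of `E₂^ε`.
-/

open scoped BigOperators Matrix

noncomputable section

/-- `I_C ⊗ 1_N`: the `(C·N) × C` matrix with entry `1` in position `((c,i), c)`
and `0` elsewhere. -/
def Kmat (C N : ℕ) : Matrix (Fin C × Fin N) (Fin C) ℝ :=
  Matrix.of fun ci c => if ci.1 = c then 1 else 0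

/-- The subspace `E₁^ε = {(H, W) : W·1_C = 0, H = (ε/√N)·(W ⊗ 1_Nᵀ)}`. -/
def E1set (C N p : ℕ) (ε : ℝ) :
    Set (Matrix (Fin p) (Fin C × Fin N) ℝ × Matrix (Fin p) (Fin C) ℝ) :=
  {z | z.2 *ᵥ (fun _ => (1 : ℝ)) = 0 ∧ z.1 = (ε / Real.sqrt N) • colRep N z.2}

/-- The subspace `E₂^ε = {((ε/√N)·h·1_{CN}ᵀ, h·1_Cᵀ) : h ∈ ℝ^p}`. -/
def E2set (C N p : ℕ) (ε : ℝ) :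
    Set (Matrix (Fin p) (Fin C × Fin N) ℝ × Matrix (Fin p) (Fin C) ℝ) :=
  {z | ∃ h : Fin p → ℝ,
    z.1 = Matrix.of (fun i (_ : Fin C × Fin N) => (ε / Real.sqrt N) * h i) ∧
    z.2 = Matrix.of (fun i (_ : Fin C) => h i)}

/-- The subspace `E₃ = {(H, 0) : H·(I_C ⊗ 1_N) = 0}`. -/
def E3set (C N p : ℕ) :
    Set (Matrix (Fin p) (Fin C × Fin N) ℝ × Matrix (Fin p) (Fin C) ℝ) :=
  {z | z.1 * Kmat C N = 0 ∧ z.2 = 0}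

section Gram

variable {l m n R : Type*} [Fintype m] [Fintype n] [CommSemiring R]

/-- The matrix-valued pairing `H₁ H₂ᵀ + W₁ W₂ᵀ` of two pairs `(H₁, W₁)` and `(H₂, W₂)`, whose trace
is the inner product on pairs of matrices. -/
def gram (z w : Matrix l m R × Matrix l n R) : Matrix l l R :=
  z.1 * w.1ᵀ + z.2 * w.2ᵀ

theorem transpose_gram (z w : Matrix l m R × Matrix l n R) : (gram z w)ᵀ = gram w z := by
  simp [gram]

/-- Orthogonality of two sets of pairs of matrices with respect to the matrix-valued pairing `gram`,
which is stronger than orthogonality for its trace. -/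
def GramOrthogonal (S T : Set (Matrix l m R × Matrix l n R)) : Prop :=
  ∀ z ∈ S, ∀ w ∈ T, gram z w = 0

theorem GramOrthogonal.symm {S T : Set (Matrix l m R × Matrix l n R)} (h : GramOrthogonal S T) :
    GramOrthogonal T S := fun w hw z hz => by
  rw [← transpose_gram, h z hz w hw, Matrix.transpose_zero]

instance : Std.Symm (GramOrthogonal (l := l) (m := m) (n := n) (R := R)) :=
  ⟨fun _ _ => GramOrthogonal.symm⟩

theorem GramOrthogonal.mono {S S' T T' : Set (Matrix l m R × Matrix l n R)} (hS : S ⊆ S')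
    (hT : T ⊆ T') (h : GramOrthogonal S' T') : GramOrthogonal S T :=
  fun z hz w hw => h z (hS hz) w (hT hw)

end Gram

section MulGraph

variable {l m n R : Type*} [Fintype n]

/-- The point over `W` of the graph of right multiplication by `A`, with the value `W A` written
first to match the order of the pairs `(H, W)`. -/
def mulGraph [NonUnitalNonAssocSemiring R] (A : Matrix n m R) (W : Matrix l n R) :
    Matrix l m R × Matrix l n R :=
  (W * A, W)

theorem mulGraph_add [NonUnitalNonAssocSemiring R] (A : Matrix n m R) (V W : Matrix l n R) :
    mulGraph A (V + W) = mulGraph A V + mulGraph A W := by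
  simp [mulGraph, Matrix.add_mul]

theorem mulGraph_add_mulGraph_neg [NonUnitalNonAssocRing R] (A : Matrix n m R)
    (V W : Matrix l n R) : mulGraph A V + mulGraph (-A) W = ((V - W) * A, V + W) := by
  simp [mulGraph, Matrix.add_mul, sub_eq_add_neg]

variable [Fintype m]

theorem gram_mulGraph_left [CommSemiring R] (A : Matrix n m R) (V : Matrix l n R)
    (w : Matrix l m R × Matrix l n R) : gram (mulGraph A V) w = V * (w.1 * Aᵀ + w.2)ᵀ := by
  simp [gram, mulGraph, Matrix.mul_add, Matrix.mul_assoc]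

variable [DecidableEq n]

theorem gram_mulGraph_mulGraph [CommSemiring R] {A B : Matrix n m R} {c : R}
    (hAB : A * Bᵀ = c • 1) (V W : Matrix l n R) :
    gram (mulGraph A V) (mulGraph B W) = (1 + c) • (V * Wᵀ) := by
  have hBA : B * Aᵀ = c • 1 := by simpa using congrArg Matrix.transpose hAB
  rw [gram_mulGraph_left, mulGraph, Matrix.mul_assoc, hBA]
  simp [Matrix.mul_add, add_smul, add_comm]

theorem gramOrthogonal_range_mulGraph_of_mul_transpose_eq_neg_one [CommRing R]
    {A B : Matrix n m R} (hAB : A * Bᵀ = -1) :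
    GramOrthogonal (Set.range (mulGraph (l := l) A)) (Set.range (mulGraph B)) := by
  rintro _ ⟨V, rfl⟩ _ ⟨W, rfl⟩
  rw [gram_mulGraph_mulGraph (c := -1) (by simpa using hAB), add_neg_cancel, zero_smul]

theorem gramOrthogonal_image_mulGraph_vecMulVec [CommSemiring R] {A B : Matrix n m R} {c : R}
    (hAB : A * Bᵀ = c • 1) (u : n → R) :
    GramOrthogonal (mulGraph A '' {V : Matrix l n R | V *ᵥ u = 0})
      (mulGraph B '' Set.range (Matrix.vecMulVec · u)) := by
  rintro _ ⟨V, hV : V *ᵥ u = 0, rfl⟩ _ ⟨_, ⟨h, rfl⟩, rfl⟩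
  rw [gram_mulGraph_mulGraph hAB, Matrix.transpose_vecMulVec, Matrix.mul_vecMulVec, hV,
    Matrix.zero_vecMulVec, smul_zero]

theorem exists_eq_mulGraph_add_mulGraph_neg_add [CommRing R] [Invertible (2 : R)]
    {A : Matrix n m R} (hA : A * Aᵀ = 1) (H : Matrix l m R) (W : Matrix l n R) :
    ∃ (X Y : Matrix l n R) (Z : Matrix l m R),
      Z * Aᵀ = 0 ∧ (H, W) = mulGraph A X + mulGraph (-A) Y + (Z, 0) := by
  refine ⟨(⅟2 : R) • (W + H * Aᵀ), (⅟2 : R) • (W - H * Aᵀ), H - H * Aᵀ * A, ?_, ?_⟩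
  · rw [Matrix.sub_mul, Matrix.mul_assoc, hA, Matrix.mul_one, sub_self]
  · have sub_halves : (⅟2 : R) • (W + H * Aᵀ) - (⅟2 : R) • (W - H * Aᵀ) = H * Aᵀ := by
      rw [← smul_sub, invOf_smul_eq_iff, two_smul]
      abel
    have add_halves : (⅟2 : R) • (W + H * Aᵀ) + (⅟2 : R) • (W - H * Aᵀ) = W := by
      rw [← smul_add, invOf_smul_eq_iff, two_smul]
      abel
    rw [mulGraph_add_mulGraph_neg, sub_halves, add_halves, Prod.mk_add_mk, add_sub_cancel,
      add_zero]

end MulGraph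

theorem exists_mulVec_eq_zero_and_eq_add_vecMulVec {l n K : Type*} [Fintype n] [Field K]
    {u : n → K} (hu : u ⬝ᵥ u ≠ 0) (W : Matrix l n K) :
    ∃ (V : Matrix l n K) (h : l → K), V *ᵥ u = 0 ∧ W = V + Matrix.vecMulVec h u := by
  set h := (u ⬝ᵥ u)⁻¹ • (W *ᵥ u) with h_def
  refine ⟨W - Matrix.vecMulVec h u, h, ?_, (sub_add_cancel _ _).symm⟩
  rw [Matrix.sub_mulVec, Matrix.vecMulVec_mulVec, op_smul_eq_smul, h_def, smul_inv_smul₀ hu,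
    sub_self]

section FiveSubspaces

variable {C N p : ℕ}

/-- The matrix `(1/√N)·(I_C ⊗ 1_N)ᵀ` of the normalized column repetition `W ↦ (1/√N)·(W ⊗ 1_Nᵀ)`,
which acts by right multiplication. -/
def colRepMat (C N : ℕ) : Matrix (Fin C) (Fin C × Fin N) ℝ :=
  (√N)⁻¹ • (Kmat C N)ᵀ

theorem colRep_eq_mul_transpose_Kmat (N : ℕ) (W : Matrix (Fin p) (Fin C) ℝ) :
    colRep N W = W * (Kmat C N)ᵀ := by
  ext
  simp [colRep, Kmat, Matrix.mul_apply]

theorem transpose_Kmat_mul_Kmat (C N : ℕ) : (Kmat C N)ᵀ * Kmat C N = (N : ℝ) • 1 := by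
  ext c d
  by_cases h : c = d <;>
    simp [Kmat, Matrix.mul_apply, Fintype.sum_prod_type, h, eq_comm (a := d)]

theorem mul_smul_colRepMat (ε : ℝ) (W : Matrix (Fin p) (Fin C) ℝ) :
    W * (ε • colRepMat C N) = (ε / √N) • colRep N W := by
  rw [colRepMat, smul_smul, Matrix.mul_smul, colRep_eq_mul_transpose_Kmat, div_eq_mul_inv]

theorem colRepMat_mul_transpose (hN : N ≠ 0) : colRepMat C N * (colRepMat C N)ᵀ = 1 := by
  have hsq : (√N)⁻¹ * (√N)⁻¹ * (N : ℝ) = 1 := by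
    rw [← mul_inv, Real.mul_self_sqrt N.cast_nonneg, inv_mul_cancel₀ (Nat.cast_ne_zero.2 hN)]
  rw [colRepMat, Matrix.transpose_smul, Matrix.transpose_transpose, Matrix.smul_mul,
    Matrix.mul_smul, transpose_Kmat_mul_Kmat, smul_smul, smul_smul, hsq, one_smul]

theorem smul_colRepMat_mul_transpose (hN : N ≠ 0) (ε δ : ℝ) :
    (ε • colRepMat C N) * (δ • colRepMat C N)ᵀ = (ε * δ) • 1 := by
  rw [Matrix.transpose_smul, Matrix.smul_mul, Matrix.mul_smul, colRepMat_mul_transpose hN,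
    smul_smul]

theorem E1set_eq_image_mulGraph (C N p : ℕ) (ε : ℝ) :
    E1set C N p ε = mulGraph (ε • colRepMat C N) '' {W | W *ᵥ 1 = 0} := by
  ext ⟨H, W⟩
  simp only [E1set, mulGraph, mul_smul_colRepMat, Set.mem_image, Set.mem_ofPred_eq, Prod.mk.injEq]
  constructor
  · rintro ⟨hW, rfl⟩
    exact ⟨W, hW, rfl, rfl⟩
  · rintro ⟨_, hW, rfl, rfl⟩
    exact ⟨hW, rfl⟩

theorem E2set_eq_image_mulGraph (C N p : ℕ) (ε : ℝ) :
    E2set C N p ε = mulGraph (ε • colRepMat C N) '' Set.range (Matrix.vecMulVec · 1) := by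
  have colRep_vecMulVec (h : Fin p → ℝ) : (ε / √N) • colRep N (Matrix.vecMulVec h (1 : Fin C → ℝ)) =
      Matrix.of fun i _ => ε / √N * h i := by
    ext
    simp [colRep, Matrix.vecMulVec_apply]
  ext ⟨H, W⟩
  simp only [E2set, mulGraph, mul_smul_colRepMat, Set.mem_image, Set.mem_ofPred_eq,
    Set.mem_range, Prod.mk.injEq]
  constructor
  · rintro ⟨h, rfl, rfl⟩
    exact ⟨_, ⟨h, rfl⟩, colRep_vecMulVec h, Matrix.vecMulVec_one h⟩
  · rintro ⟨_, ⟨h, rfl⟩, rfl, rfl⟩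
    exact ⟨h, colRep_vecMulVec h, Matrix.vecMulVec_one h⟩

theorem E1set_subset_range_mulGraph (C N p : ℕ) (ε : ℝ) :
    E1set C N p ε ⊆ Set.range (mulGraph (ε • colRepMat C N)) :=
  E1set_eq_image_mulGraph C N p ε ▸ Set.image_subset_range _ _

theorem E2set_subset_range_mulGraph (C N p : ℕ) (ε : ℝ) :
    E2set C N p ε ⊆ Set.range (mulGraph (ε • colRepMat C N)) :=
  E2set_eq_image_mulGraph C N p ε ▸ Set.image_subset_range _ _

theorem mem_E3set_iff (hN : N ≠ 0)
    {z : Matrix (Fin p) (Fin C × Fin N) ℝ × Matrix (Fin p) (Fin C) ℝ} :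
    z ∈ E3set C N p ↔ z.1 * (colRepMat C N)ᵀ = 0 ∧ z.2 = 0 := by
  simp [E3set, colRepMat, hN]

theorem gramOrthogonal_range_mulGraph_colRepMat (hN : N ≠ 0) {ε δ : ℝ} (hεδ : ε * δ = -1) :
    GramOrthogonal (Set.range (mulGraph (l := Fin p) (ε • colRepMat C N)))
      (Set.range (mulGraph (δ • colRepMat C N))) :=
  gramOrthogonal_range_mulGraph_of_mul_transpose_eq_neg_one <| by
    rw [smul_colRepMat_mul_transpose hN, hεδ, neg_one_smul]

theorem gramOrthogonal_E1set_E2set (hN : N ≠ 0) (ε δ : ℝ) :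
    GramOrthogonal (E1set C N p ε) (E2set C N p δ) := by
  rw [E1set_eq_image_mulGraph, E2set_eq_image_mulGraph]
  exact gramOrthogonal_image_mulGraph_vecMulVec (smul_colRepMat_mul_transpose hN ε δ) 1

theorem gramOrthogonal_range_mulGraph_E3set (ε : ℝ) :
    GramOrthogonal (Set.range (mulGraph (ε • colRepMat C N))) (E3set C N p) := by
  rintro _ ⟨V, rfl⟩ w ⟨hH, hW⟩
  rw [gram_mulGraph_left, colRepMat, smul_smul, Matrix.transpose_smul, Matrix.transpose_transpose,
    Matrix.mul_smul, hH, hW, smul_zero, add_zero, Matrix.transpose_zero, Matrix.mul_zero]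

theorem pairwise_gramOrthogonal_five_subspaces (hN : N ≠ 0) :
    Pairwise (Function.onFun GramOrthogonal
      ![E1set C N p 1, E1set C N p (-1), E2set C N p 1, E2set C N p (-1), E3set C N p]) := by
  have E1_sub := E1set_subset_range_mulGraph C N p
  have E2_sub := E2set_subset_range_mulGraph C N p
  have opposite := gramOrthogonal_range_mulGraph_colRepMat (C := C) (p := p) hN
    (mul_neg_one (1 : ℝ))
  have E1_E2 := gramOrthogonal_E1set_E2set (C := C) (p := p) hN
  have graph_E3 := gramOrthogonal_range_mulGraph_E3set (C := C) (N := N) (p := p)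
  refine (Std.Symm.pairwise_on _).2 fun a b hab => ?_
  fin_cases a <;> fin_cases b <;> first
    | exact absurd hab (by decide)
    | exact E1_E2 _ _
    | exact opposite.mono (E1_sub _) (E1_sub _)
    | exact opposite.mono (E2_sub _) (E2_sub _)
    | exact (graph_E3 _).mono (E1_sub _) subset_rfl
    | exact (graph_E3 _).mono (E2_sub _) subset_rfl

theorem exists_E1set_E2set_mulGraph_eq_add (hC : C ≠ 0) (ε : ℝ) (W : Matrix (Fin p) (Fin C) ℝ) :
    ∃ z₁ ∈ E1set C N p ε, ∃ z₂ ∈ E2set C N p ε, mulGraph (ε • colRepMat C N) W = z₁ + z₂ := by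
  have one_dotProduct_one_ne : (1 : Fin C → ℝ) ⬝ᵥ 1 ≠ 0 := by simpa using hC
  obtain ⟨V, h, hV, rfl⟩ := exists_mulVec_eq_zero_and_eq_add_vecMulVec one_dotProduct_one_ne W
  rw [E1set_eq_image_mulGraph, E2set_eq_image_mulGraph]
  exact ⟨_, ⟨V, hV, rfl⟩, _, ⟨_, ⟨h, rfl⟩, rfl⟩, mulGraph_add _ _ _⟩

end FiveSubspaces

/-- **Orthogonal decomposition into the five subspaces `E₁⁺, E₁⁻, E₂⁺, E₂⁻, E₃`.**
(a) Elements of two distinct subspaces satisfy `H₁·H₂ᵀ + W₁·W₂ᵀ = 0`, so the subspaces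
are pairwise orthogonal for the trace inner product `Tr(H·H'ᵀ) + Tr(W·W'ᵀ)`.
(b) Every pair `(H, W)` decomposes as a sum of five elements, one from each subspace. -/
theorem five_subspaces_orthogonal_decomposition
    (C N p : ℕ) (hC : 1 ≤ C) (hN : 1 ≤ N) (hp : 1 ≤ p) :
    (∀ a b : Fin 5, a ≠ b →
      ∀ z1 ∈ ![E1set C N p 1, E1set C N p (-1), E2set C N p 1,
               E2set C N p (-1), E3set C N p] a,
      ∀ z2 ∈ ![E1set C N p 1, E1set C N p (-1), E2set C N p 1,
               E2set C N p (-1), E3set C N p] b,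
        z1.1 * z2.1ᵀ + z1.2 * z2.2ᵀ = 0) ∧
    (∀ z : Matrix (Fin p) (Fin C × Fin N) ℝ × Matrix (Fin p) (Fin C) ℝ,
      ∃ z1 ∈ E1set C N p 1, ∃ z2 ∈ E1set C N p (-1), ∃ z3 ∈ E2set C N p 1,
      ∃ z4 ∈ E2set C N p (-1), ∃ z5 ∈ E3set C N p,
        z = z1 + z2 + z3 + z4 + z5) := by
  have hC₀ : C ≠ 0 := Nat.one_le_iff_ne_zero.1 hC
  have hN₀ : N ≠ 0 := Nat.one_le_iff_ne_zero.1 hN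
  refine ⟨fun a b hab => pairwise_gramOrthogonal_five_subspaces hN₀ hab, ?_⟩
  rintro ⟨H, W⟩
  obtain ⟨X, Y, Z, hZ, hHW⟩ :=
    exists_eq_mulGraph_add_mulGraph_neg_add (colRepMat_mul_transpose hN₀) H W
  obtain ⟨z₁, hz₁, z₃, hz₃, hX⟩ := exists_E1set_E2set_mulGraph_eq_add (N := N) hC₀ 1 X
  obtain ⟨z₂, hz₂, z₄, hz₄, hY⟩ := exists_E1set_E2set_mulGraph_eq_add (N := N) hC₀ (-1) Y
  refine ⟨z₁, hz₁, z₂, hz₂, z₃, hz₃, z₄, hz₄, (Z, 0), (mem_E3set_iff hN₀).2 ⟨hZ, rfl⟩, ?_⟩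
  rw [one_smul] at hX
  rw [neg_one_smul] at hY
  rw [hHW, hX, hY]
  abel
end
end

section
/- Fix integers C, N, p ≥ 1 and a real γ with either C = 2 and γ > 0, or C > 2 and 0 < γ < 2/(C−2). Let s > 0, let η2 : ℝ → ℝ be continuous with η2(t) > 0 for all t, set η1 = s·η2, ζ_k(t) = ∫_0^t η_k(τ) dτ, and assume ζ1(t) → ∞ as t → ∞. Suppose H : ℝ → ℝ^{p×(CN)}, W : ℝ → ℝ^{p×C} are continuously differentiable and satisfy H'(t) = η1(t)·W(t)·M − λ·η1(t)·H(t) and W'(t) = η2(t)·H(t)·M^T − λ·η2(t)·W(t) for all t ≥ 0, where λ = (1+γ)/(C·√N). Define P^ε, H1^ε, W1^ε from H(0), W(0) as in the context. Then, in Frobenius norm, H(t) → H1^+ + ((1−s)/(1+s))·H1^− and W(t) → W1^+ − ((1−s)/(1+s))·W1^− as t → ∞. -/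
/-!
Write `r = √N`, `a = lam`, `b = γ / (C r)`, and let `G` be the class sums of the features divided
by `r`. Row by row, `(G, w)` solves the linear system
`G' = s η (a w - b ∑ w - a G)`, `w' = η (a G - b ∑ G - a w)`, a fixed matrix multiplied by the
scalar `η`. It therefore splits into scalar modes `u' = -κ η u`, that is `u = exp (-κ ζ) u₀` with
`ζ = ∫ η`:

* the pair `(∑ G, ∑ w)` splits into two modes, both with `κ > 0`, because the condition on `γ`
  gives `|a - C b| < a`;
* the centred part of `G - w` is a mode with `κ = (1 + s) a`;
* the centred part of `G + s w` is a mode with `κ = 0`, so it is conserved and determines the limit;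
* the deviation of a feature from its class mean is a mode with `κ = s a`.
-/

open scoped BigOperators Matrix
open Filter

noncomputable section

/-- The Frobenius norm of a real matrix. -/
def frob {m n : Type*} [Fintype m] [Fintype n] (A : Matrix m n ℝ) : ℝ :=
  Real.sqrt (∑ i, ∑ j, (A i j) ^ 2)

/-- `P^ε = (1/2)·((ε/√N)·H0·(I_C ⊗ 1_N) + W0)·(I_C − (1/C)·1_C·1_Cᵀ)`. -/
def Pproj {p : ℕ} (C N : ℕ) (ε : ℝ) (H0 : Matrix (Fin p) (Fin C × Fin N) ℝ)
    (W0 : Matrix (Fin p) (Fin C) ℝ) : Matrix (Fin p) (Fin C) ℝ :=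
  ((1 / 2 : ℝ) • ((ε / Real.sqrt N) • (H0 * Kmat C N) + W0)) *
    ((1 : Matrix (Fin C) (Fin C) ℝ) - ((C : ℝ))⁻¹ • Matrix.of fun _ _ => (1 : ℝ))

/-- `H1^ε = (ε/√N)·(P^ε ⊗ 1_Nᵀ)`. -/
def H1comp {p : ℕ} (C N : ℕ) (ε : ℝ) (H0 : Matrix (Fin p) (Fin C × Fin N) ℝ)
    (W0 : Matrix (Fin p) (Fin C) ℝ) : Matrix (Fin p) (Fin C × Fin N) ℝ :=
  (ε / Real.sqrt N) • colRep N (Pproj C N ε H0 W0)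

section LinearDecay

variable {E : Type*} [NormedAddCommGroup E] [NormedSpace ℝ E] {η ζ : ℝ → ℝ}

lemma eq_initial_of_hasDerivAt_zero {u : ℝ → E} (hu : ∀ t, 0 ≤ t → HasDerivAt u 0 t)
    {t : ℝ} (ht : 0 ≤ t) : u t = u 0 :=
  constant_of_has_deriv_right_zero
    (fun τ hτ => (hu τ hτ.1).continuousAt.continuousWithinAt)
    (fun τ hτ => (hu τ hτ.1).hasDerivWithinAt) t ⟨ht, le_rfl⟩

lemma eq_exp_smul_of_hasDerivAt {u : ℝ → E} {κ : ℝ}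
    (hζ : ∀ t, 0 ≤ t → HasDerivAt ζ (η t) t)
    (hu : ∀ t, 0 ≤ t → HasDerivAt u (-(κ * η t) • u t) t) {t : ℝ} (ht : 0 ≤ t) :
    u t = Real.exp (-(κ * (ζ t - ζ 0))) • u 0 := by
  have hconst : Real.exp (κ * (ζ t - ζ 0)) • u t = Real.exp (κ * (ζ 0 - ζ 0)) • u 0 := by
    refine eq_initial_of_hasDerivAt_zero (u := fun τ => Real.exp (κ * (ζ τ - ζ 0)) • u τ)
      (fun τ hτ => ?_) ht
    refine ((((hζ τ hτ).sub_const (ζ 0)).const_mul κ).exp.smul (hu τ hτ)).congr_deriv ?_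
    module
  rw [sub_self, mul_zero, Real.exp_zero, one_smul] at hconst
  rw [← hconst, smul_smul, ← Real.exp_add, neg_add_cancel, Real.exp_zero, one_smul]

lemma tendsto_zero_of_hasDerivAt_neg_smul {u : ℝ → E} {κ : ℝ} (hκ : 0 < κ)
    (hζ : ∀ t, 0 ≤ t → HasDerivAt ζ (η t) t) (hζ_top : Tendsto ζ atTop atTop)
    (hu : ∀ t, 0 ≤ t → HasDerivAt u (-(κ * η t) • u t) t) :
    Tendsto u atTop (nhds 0) := by
  have hrate : Tendsto (fun t => κ * (ζ t - ζ 0)) atTop atTop :=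
    (tendsto_atTop_add_const_right _ (-ζ 0) hζ_top).const_mul_atTop hκ
  have hexp := (Real.tendsto_exp_neg_atTop_nhds_zero.comp hrate).smul_const (u 0)
  rw [zero_smul] at hexp
  refine hexp.congr' ?_
  filter_upwards [eventually_ge_atTop 0] with t ht
  exact (eq_exp_smul_of_hasDerivAt hζ hu ht).symm

/-- The equation for `κ` is the characteristic equation of `!![s * a, -(s * m); -m, a]`. -/
lemma exists_pos_lt_decay_rates {s a m : ℝ} (hs : 0 < s) (hm : |m| < a) (hm0 : m ≠ 0) :
    ∃ κ₁ κ₂ : ℝ, 0 < κ₁ ∧ κ₁ < κ₂ ∧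
      (s * a - κ₁) * (a - κ₁) = s * m ^ 2 ∧ (s * a - κ₂) * (a - κ₂) = s * m ^ 2 := by
  have ha : 0 < a := (abs_nonneg m).trans_lt hm
  have hma : m ^ 2 < a ^ 2 := sq_lt_sq' (abs_lt.1 hm).1 (abs_lt.1 hm).2
  set D : ℝ := ((1 - s) * a) ^ 2 + 4 * (s * m ^ 2)
  have hD0 : 0 < D := by positivity
  have hsqrt : √D ^ 2 = D := Real.sq_sqrt hD0.le
  have hsqrt0 : 0 < √D := Real.sqrt_pos.2 hD0
  have hsqrt_lt : √D < (1 + s) * a := by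
    rw [Real.sqrt_lt' (by positivity)]
    linarith [mul_lt_mul_of_pos_left hma hs]
  exact ⟨((1 + s) * a - √D) / 2, ((1 + s) * a + √D) / 2, by linarith, by linarith,
    by linarith, by linarith⟩

lemma tendsto_zero_of_hasDerivAt_coupled {x y : ℝ → E} {s a m : ℝ} (hs : 0 < s) (hm : |m| < a)
    (hζ : ∀ t, 0 ≤ t → HasDerivAt ζ (η t) t) (hζ_top : Tendsto ζ atTop atTop)
    (hx : ∀ t, 0 ≤ t → HasDerivAt x ((s * η t) • (m • y t - a • x t)) t)
    (hy : ∀ t, 0 ≤ t → HasDerivAt y (η t • (m • x t - a • y t)) t) :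
    Tendsto x atTop (nhds 0) ∧ Tendsto y atTop (nhds 0) := by
  have ha : 0 < a := (abs_nonneg m).trans_lt hm
  rcases eq_or_ne m 0 with rfl | hm0
  · exact ⟨tendsto_zero_of_hasDerivAt_neg_smul (mul_pos hs ha) hζ hζ_top
        fun t ht => (hx t ht).congr_deriv (by module),
      tendsto_zero_of_hasDerivAt_neg_smul ha hζ hζ_top
        fun t ht => (hy t ht).congr_deriv (by module)⟩
  have hmode {κ : ℝ} (hκ : 0 < κ) (hroot : (s * a - κ) * (a - κ) = s * m ^ 2) :
      Tendsto (fun t => m • x t + (s * a - κ) • y t) atTop (nhds 0) := by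
    refine tendsto_zero_of_hasDerivAt_neg_smul hκ hζ hζ_top fun t ht => ?_
    refine (((hx t ht).const_smul m).add ((hy t ht).const_smul (s * a - κ))).congr_deriv ?_
    match_scalars
    · linear_combination -η t * hroot
    · ring
  obtain ⟨κ₁, κ₂, hκ₁, hlt, hroot₁, hroot₂⟩ := exists_pos_lt_decay_rates hs hm hm0
  have hne : κ₂ - κ₁ ≠ 0 := (sub_pos.2 hlt).ne'
  have hu₁ := hmode hκ₁ hroot₁
  have hu₂ := hmode (hκ₁.trans hlt) hroot₂
  have hy_lim : Tendsto y atTop (nhds 0) := by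
    have hlim := (hu₁.sub hu₂).const_smul (κ₂ - κ₁)⁻¹
    rw [sub_zero, smul_zero] at hlim
    refine hlim.congr fun t => ?_
    match_scalars <;> (field_simp; ring)
  refine ⟨?_, hy_lim⟩
  have hlim := (hu₁.sub (hy_lim.const_smul (s * a - κ₁))).const_smul m⁻¹
  rw [smul_zero, sub_zero, smul_zero] at hlim
  refine hlim.congr fun t => ?_
  rw [add_sub_cancel_right, inv_smul_smul₀ hm0]

end LinearDecay

section Centered

variable {ι E : Type*} [Fintype ι]

/-- The family `x` with its mean subtracted, `x c - (1 / |ι|) ∑ x`; this is the action of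
`I_C - (1/C) 1_C 1_Cᵀ` on a row of prototypes. -/
def centered [AddCommGroup E] [Module ℝ E] (x : ι → E) (c : ι) : E :=
  x c - (Fintype.card ι : ℝ)⁻¹ • ∑ c', x c'

lemma sum_coupling [AddCommGroup E] [Module ℝ E] (x y : ι → E) (k a b : ℝ) :
    ∑ c, k • (a • x c - b • ∑ c', x c' - a • y c) =
      k • ((a - Fintype.card ι * b) • ∑ c, x c - a • ∑ c, y c) := by
  simp only [← Finset.smul_sum, Finset.sum_sub_distrib, Finset.sum_const, Finset.card_univ,
    ← Nat.cast_smul_eq_nsmul ℝ]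
  module

lemma centered_coupling [AddCommGroup E] [Module ℝ E] [Nonempty ι] (x y : ι → E) (k a b : ℝ)
    (c : ι) :
    centered (fun c => k • (a • x c - b • ∑ c', x c' - a • y c)) c =
      (k * a) • (centered x c - centered y c) := by
  have hcard : (Fintype.card ι : ℝ) ≠ 0 := Nat.cast_ne_zero.2 Fintype.card_ne_zero
  simp only [centered, sum_coupling]
  match_scalars <;> field_simp
  ring

lemma hasDerivAt_centered [NormedAddCommGroup E] [NormedSpace ℝ E] {x : ℝ → ι → E} {x' : ι → E}
    {t : ℝ} (hx : ∀ c, HasDerivAt (fun τ => x τ c) (x' c) t) (c : ι) :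
    HasDerivAt (fun τ => centered (x τ) c) (centered x' c) t :=
  (hx c).sub ((HasDerivAt.fun_sum fun c' _ => hx c').const_smul _)

end Centered

/-- The class-level system `G' = s η (a w - b ∑ w - a G)`, `w' = η (a G - b ∑ G - a w)` for times
`t ≥ 0`, with classes indexed by `ι`; `G` stands for the scaled class sums of the features and `w`
for the prototypes. -/
structure IsClassFlow {ι E : Type*} [Fintype ι] [NormedAddCommGroup E] [NormedSpace ℝ E]
    (η : ℝ → ℝ) (s a b : ℝ) (G w : ℝ → ι → E) : Prop where
  hasDerivAt_left : ∀ t, 0 ≤ t → ∀ c, HasDerivAt (fun τ => G τ c)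
    ((s * η t) • (a • w t c - b • ∑ c', w t c' - a • G t c)) t
  hasDerivAt_right : ∀ t, 0 ≤ t → ∀ c, HasDerivAt (fun τ => w τ c)
    (η t • (a • G t c - b • ∑ c', G t c' - a • w t c)) t

namespace IsClassFlow

variable {ι E : Type*} [Fintype ι] [NormedAddCommGroup E] [NormedSpace ℝ E]
  {η ζ : ℝ → ℝ} {s a b : ℝ} {G w : ℝ → ι → E}

lemma tendsto_sum_zero (h : IsClassFlow η s a b G w) (hs : 0 < s)
    (hab : |a - Fintype.card ι * b| < a)
    (hζ : ∀ t, 0 ≤ t → HasDerivAt ζ (η t) t) (hζ_top : Tendsto ζ atTop atTop) :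
    Tendsto (fun t => ∑ c, G t c) atTop (nhds 0) ∧
      Tendsto (fun t => ∑ c, w t c) atTop (nhds 0) :=
  tendsto_zero_of_hasDerivAt_coupled hs hab hζ hζ_top
    (fun t ht => (HasDerivAt.fun_sum fun c _ => h.hasDerivAt_left t ht c).congr_deriv
      (sum_coupling ..))
    (fun t ht => (HasDerivAt.fun_sum fun c _ => h.hasDerivAt_right t ht c).congr_deriv
      (sum_coupling ..))

variable [Nonempty ι]

lemma hasDerivAt_centered_left (h : IsClassFlow η s a b G w) {t : ℝ} (ht : 0 ≤ t) (c : ι) :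
    HasDerivAt (fun τ => centered (G τ) c)
      ((s * η t * a) • (centered (w t) c - centered (G t) c)) t :=
  (hasDerivAt_centered (h.hasDerivAt_left t ht) c).congr_deriv (centered_coupling ..)

lemma hasDerivAt_centered_right (h : IsClassFlow η s a b G w) {t : ℝ} (ht : 0 ≤ t) (c : ι) :
    HasDerivAt (fun τ => centered (w τ) c)
      ((η t * a) • (centered (G t) c - centered (w t) c)) t :=
  (hasDerivAt_centered (h.hasDerivAt_right t ht) c).congr_deriv (centered_coupling ..)

lemma tendsto_centered_sub_centered (h : IsClassFlow η s a b G w) (hsa : 0 < (1 + s) * a)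
    (hζ : ∀ t, 0 ≤ t → HasDerivAt ζ (η t) t) (hζ_top : Tendsto ζ atTop atTop) (c : ι) :
    Tendsto (fun t => centered (G t) c - centered (w t) c) atTop (nhds 0) :=
  tendsto_zero_of_hasDerivAt_neg_smul hsa hζ hζ_top fun t ht =>
    ((h.hasDerivAt_centered_left ht c).sub (h.hasDerivAt_centered_right ht c)).congr_deriv
      (by module)

lemma centered_add_smul_centered_eq (h : IsClassFlow η s a b G w) {t : ℝ} (ht : 0 ≤ t) (c : ι) :
    centered (G t) c + s • centered (w t) c = centered (G 0) c + s • centered (w 0) c :=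
  eq_initial_of_hasDerivAt_zero
    (u := fun τ => centered (G τ) c + s • centered (w τ) c)
    (fun τ hτ => ((h.hasDerivAt_centered_left hτ c).add
      ((h.hasDerivAt_centered_right hτ c).const_smul s)).congr_deriv (by module)) ht

lemma tendsto_centered (h : IsClassFlow η s a b G w) (hs : 0 < s) (ha : 0 < a)
    (hζ : ∀ t, 0 ≤ t → HasDerivAt ζ (η t) t) (hζ_top : Tendsto ζ atTop atTop) (c : ι) :
    Tendsto (fun t => centered (G t) c) atTop
        (nhds ((1 + s)⁻¹ • (centered (G 0) c + s • centered (w 0) c))) ∧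
      Tendsto (fun t => centered (w t) c) atTop
        (nhds ((1 + s)⁻¹ • (centered (G 0) c + s • centered (w 0) c))) := by
  have hs1 : 1 + s ≠ 0 := by positivity
  have hdiff := h.tendsto_centered_sub_centered (by positivity) hζ hζ_top c
  have hw : Tendsto (fun t => centered (w t) c) atTop
      (nhds ((1 + s)⁻¹ • (centered (G 0) c + s • centered (w 0) c))) := by
    have hlim := (hdiff.const_sub (centered (G 0) c + s • centered (w 0) c)).const_smul (1 + s)⁻¹
    rw [sub_zero] at hlim
    refine hlim.congr' ?_
    filter_upwards [eventually_ge_atTop 0] with t ht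
    rw [← h.centered_add_smul_centered_eq ht c]
    match_scalars <;> (field_simp; ring)
  exact ⟨by simpa only [sub_add_cancel, zero_add] using hdiff.add hw, hw⟩

lemma tendsto (h : IsClassFlow η s a b G w) (hs : 0 < s) (hab : |a - Fintype.card ι * b| < a)
    (hζ : ∀ t, 0 ≤ t → HasDerivAt ζ (η t) t) (hζ_top : Tendsto ζ atTop atTop) (c : ι) :
    Tendsto (fun t => G t c) atTop
        (nhds ((1 + s)⁻¹ • (centered (G 0) c + s • centered (w 0) c))) ∧
      Tendsto (fun t => w t c) atTop
        (nhds ((1 + s)⁻¹ • (centered (G 0) c + s • centered (w 0) c))) := by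
  obtain ⟨hG_sum, hw_sum⟩ := h.tendsto_sum_zero hs hab hζ hζ_top
  obtain ⟨hG, hw⟩ := h.tendsto_centered hs ((abs_nonneg _).trans_lt hab) hζ hζ_top c
  constructor
  · simpa only [centered, sub_add_cancel, smul_zero, add_zero]
      using hG.add (hG_sum.const_smul (Fintype.card ι : ℝ)⁻¹)
  · simpa only [centered, sub_add_cancel, smul_zero, add_zero]
      using hw.add (hw_sum.const_smul (Fintype.card ι : ℝ)⁻¹)

end IsClassFlow

lemma tendsto_frob_sub_zero {α m n : Type*} [Fintype m] [Fintype n] {l : Filter α}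
    {A : α → Matrix m n ℝ} {L : Matrix m n ℝ}
    (h : ∀ i j, Tendsto (fun t => A t i j) l (nhds (L i j))) :
    Tendsto (fun t => frob (A t - L)) l (nhds 0) := by
  have hcont : Continuous (frob : Matrix m n ℝ → ℝ) := by
    unfold frob
    fun_prop
  have hA : Tendsto A l (nhds L) := tendsto_pi_nhds.2 fun i => tendsto_pi_nhds.2 (h i)
  have hfrob := (hcont.tendsto _).comp (hA.sub_const L)
  simpa [frob, Function.comp_def] using hfrob

/-- The critical weight decay `(1 + γ) / (C √N)`, which for the admissible `γ` is the largest
singular value of `Mmat C N γ`. -/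
def criticalDecay (C N : ℕ) (γ : ℝ) : ℝ :=
  (1 + γ) / (C * √(N : ℝ))

section Matrices

variable {C N p : ℕ} {m : Type*}

/-- The class sums `H (I_C ⊗ 1_N) / √N` of the features, normalised so that `H` coupled to `W`
becomes a symmetric system in `(scaledClassSum H, W)`. -/
def scaledClassSum (H : Matrix m (Fin C × Fin N) ℝ) : Matrix m (Fin C) ℝ :=
  (√(N : ℝ))⁻¹ • (H * Kmat C N)

lemma mul_Kmat_apply (H : Matrix m (Fin C × Fin N) ℝ) (i : m) (c : Fin C) :
    (H * Kmat C N) i c = ∑ n, H i (c, n) := by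
  simp [Kmat, Matrix.mul_apply, Fintype.sum_prod_type_right]

lemma mul_transpose_Kmat_apply (W : Matrix m (Fin C) ℝ) (i : m) (c : Fin C) (n : Fin N) :
    (W * (Kmat C N)ᵀ) i (c, n) = W i c := by
  simp [Kmat, Matrix.mul_apply]

lemma scaledClassSum_apply (H : Matrix m (Fin C × Fin N) ℝ) (i : m) (c : Fin C) :
    scaledClassSum H i c = (√(N : ℝ))⁻¹ * ∑ n, H i (c, n) := by
  rw [scaledClassSum, Matrix.smul_apply, mul_Kmat_apply, smul_eq_mul]

lemma Mmat_eq (γ : ℝ) : Mmat C N γ =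
    (√(N : ℝ))⁻¹ • (criticalDecay C N γ • (Kmat C N)ᵀ
      - (γ / (C * √(N : ℝ))) • Matrix.of fun _ _ => (1 : ℝ)) := by
  ext c j
  have hCN : (C : ℝ) * N = √(N : ℝ) * (C * √(N : ℝ)) := by
    linear_combination -(C : ℝ) * Real.mul_self_sqrt N.cast_nonneg
  simp only [Mmat, Kmat, Matrix.of_apply, Matrix.smul_apply, Matrix.sub_apply,
    Matrix.transpose_apply, smul_eq_mul, mul_one, eq_comm (a := c), hCN, criticalDecay]
  ring

lemma mul_Mmat_apply (γ : ℝ) (W : Matrix m (Fin C) ℝ) (i : m) (c : Fin C) (n : Fin N) :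
    (W * Mmat C N γ) i (c, n) = (√(N : ℝ))⁻¹ *
      (criticalDecay C N γ * W i c - γ / (C * √(N : ℝ)) * ∑ c', W i c') := by
  simp only [Mmat_eq, Matrix.mul_smul, Matrix.mul_sub, Matrix.smul_apply, Matrix.sub_apply,
    mul_transpose_Kmat_apply, smul_eq_mul]
  simp only [Matrix.mul_apply, Matrix.of_apply, mul_one]

lemma mul_transpose_Mmat_apply (γ : ℝ) (H : Matrix m (Fin C × Fin N) ℝ) (i : m) (c : Fin C) :
    (H * (Mmat C N γ)ᵀ) i c = criticalDecay C N γ * scaledClassSum H i c -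
      γ / (C * √(N : ℝ)) * ∑ c', scaledClassSum H i c' := by
  simp only [Mmat_eq, Matrix.transpose_smul, Matrix.transpose_sub, Matrix.transpose_transpose,
    Matrix.mul_smul, Matrix.mul_sub, Matrix.smul_apply, Matrix.sub_apply, mul_Kmat_apply,
    smul_eq_mul, scaledClassSum_apply, ← Finset.mul_sum]
  simp only [Matrix.mul_apply, Matrix.transpose_apply, Matrix.of_apply, mul_one,
    Fintype.sum_prod_type]
  ring

lemma mul_one_sub_mean_apply (A : Matrix m (Fin C) ℝ) (i : m) (c : Fin C) :
    (A * ((1 : Matrix (Fin C) (Fin C) ℝ) - (C : ℝ)⁻¹ • Matrix.of fun _ _ => (1 : ℝ)) :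
      Matrix m (Fin C) ℝ) i c = centered (A i) c := by
  simp only [Matrix.mul_sub, Matrix.mul_one, Matrix.mul_smul, Matrix.sub_apply, Matrix.smul_apply,
    centered, Fintype.card_fin]
  simp only [Matrix.mul_apply, Matrix.of_apply, mul_one]

lemma Pproj_apply (ε : ℝ) (H : Matrix (Fin p) (Fin C × Fin N) ℝ) (W : Matrix (Fin p) (Fin C) ℝ)
    (i : Fin p) (c : Fin C) :
    Pproj C N ε H W i c = (ε * centered (scaledClassSum H i) c + centered (W i) c) / 2 := by
  have hsum : (ε / √(N : ℝ)) • (H * Kmat C N) = ε • scaledClassSum H := by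
    rw [scaledClassSum, smul_smul, div_eq_mul_inv]
  rw [Pproj, mul_one_sub_mean_apply, hsum]
  simp only [centered, Matrix.smul_apply, Matrix.add_apply, smul_eq_mul, ← Finset.mul_sum,
    Finset.sum_add_distrib]
  ring

lemma Pproj_sub_smul_Pproj_apply {s : ℝ} (hs : 1 + s ≠ 0)
    (H : Matrix (Fin p) (Fin C × Fin N) ℝ) (W : Matrix (Fin p) (Fin C) ℝ)
    (i : Fin p) (c : Fin C) :
    (Pproj C N 1 H W - ((1 - s) / (1 + s)) • Pproj C N (-1) H W) i c =
      (1 + s)⁻¹ * (centered (scaledClassSum H i) c + s * centered (W i) c) := by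
  simp only [Matrix.sub_apply, Matrix.smul_apply, smul_eq_mul, Pproj_apply]
  field_simp
  ring

lemma H1comp_add_smul_H1comp_apply (k : ℝ) (H : Matrix (Fin p) (Fin C × Fin N) ℝ)
    (W : Matrix (Fin p) (Fin C) ℝ) (i : Fin p) (c : Fin C) (n : Fin N) :
    (H1comp C N 1 H W + k • H1comp C N (-1) H W) i (c, n) =
      (√(N : ℝ))⁻¹ * (Pproj C N 1 H W - k • Pproj C N (-1) H W) i c := by
  simp only [H1comp, colRep, Matrix.add_apply, Matrix.sub_apply, Matrix.smul_apply,
    Matrix.of_apply, smul_eq_mul]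
  ring

end Matrices

/-- The regularized flow of features `H` and prototypes `W` for times `t ≥ 0`: learning rates
`s * η` for `H` and `η` for `W`, weight decay `lam`. -/
structure IsRegularizedFlow {C N : ℕ} {m : Type*} (η : ℝ → ℝ) (s γ lam : ℝ)
    (H : ℝ → Matrix m (Fin C × Fin N) ℝ) (W : ℝ → Matrix m (Fin C) ℝ) : Prop where
  hasDerivAt_left : ∀ t, 0 ≤ t → ∀ i j, HasDerivAt (fun τ => H τ i j)
    ((s * η t) * (W t * Mmat C N γ) i j - lam * (s * η t) * H t i j) t
  hasDerivAt_right : ∀ t, 0 ≤ t → ∀ i c, HasDerivAt (fun τ => W τ i c)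
    (η t * (H t * (Mmat C N γ)ᵀ) i c - lam * η t * W t i c) t

lemma mul_sub_two_lt_two {C : ℕ} {γ : ℝ}
    (hγ : (C = 2 ∧ 0 < γ) ∨ (2 < C ∧ 0 < γ ∧ γ < 2 / ((C : ℝ) - 2))) :
    γ * ((C : ℝ) - 2) < 2 := by
  rcases hγ with ⟨rfl, -⟩ | ⟨hC, -, hγ_lt⟩
  · norm_num
  · exact (lt_div_iff₀ (sub_pos.2 (by exact_mod_cast hC))).1 hγ_lt

lemma abs_criticalDecay_sub_lt {C N : ℕ} {γ : ℝ} (hC : 1 ≤ C) (hN : 1 ≤ N) (hγ : 0 < γ)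
    (hγC : γ * ((C : ℝ) - 2) < 2) :
    |criticalDecay C N γ - C * (γ / (C * √(N : ℝ)))| < criticalDecay C N γ := by
  have hC0 : (0 : ℝ) < C := by exact_mod_cast hC
  have hr0 : 0 < √(N : ℝ) := Real.sqrt_pos.2 (by exact_mod_cast hN)
  rw [criticalDecay, mul_div_assoc', ← sub_div, abs_div, abs_of_pos (mul_pos hC0 hr0)]
  refine div_lt_div_of_pos_right (abs_lt.2 ⟨?_, ?_⟩) (mul_pos hC0 hr0)
  · linarith
  · linarith [mul_pos hC0 hγ]

namespace IsRegularizedFlow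

variable {C N : ℕ} {m : Type*} {γ s : ℝ} {η ζ : ℝ → ℝ} {H : ℝ → Matrix m (Fin C × Fin N) ℝ}
  {W : ℝ → Matrix m (Fin C) ℝ}

lemma hasDerivAt_feature (h : IsRegularizedFlow η s γ (criticalDecay C N γ) H W)
    {t : ℝ} (ht : 0 ≤ t) (i : m) (c : Fin C) (n : Fin N) :
    HasDerivAt (fun τ => H τ i (c, n)) (s * η t * ((√(N : ℝ))⁻¹ *
      (criticalDecay C N γ * W t i c - γ / (C * √(N : ℝ)) * ∑ c', W t i c') -
        criticalDecay C N γ * H t i (c, n))) t := by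
  refine (h.hasDerivAt_left t ht i (c, n)).congr_deriv ?_
  rw [mul_Mmat_apply]
  ring

lemma hasDerivAt_scaledClassSum (h : IsRegularizedFlow η s γ (criticalDecay C N γ) H W)
    (hN : 1 ≤ N) {t : ℝ} (ht : 0 ≤ t) (i : m) (c : Fin C) :
    HasDerivAt (fun τ => scaledClassSum (H τ) i c) (s * η t *
      (criticalDecay C N γ * W t i c - γ / (C * √(N : ℝ)) * ∑ c', W t i c' -
        criticalDecay C N γ * scaledClassSum (H t) i c)) t := by
  have hN0 : (N : ℝ) ≠ 0 := Nat.cast_ne_zero.2 (by lia)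
  have hinv : (√(N : ℝ))⁻¹ * (√(N : ℝ))⁻¹ * N = 1 := by
    rw [← mul_inv, Real.mul_self_sqrt N.cast_nonneg, inv_mul_cancel₀ hN0]
  simp only [scaledClassSum_apply]
  refine ((HasDerivAt.fun_sum fun n _ => h.hasDerivAt_feature ht i c n).const_mul
    (√(N : ℝ))⁻¹).congr_deriv ?_
  simp only [← Finset.mul_sum, Finset.sum_sub_distrib, Finset.sum_const, Finset.card_univ,
    Fintype.card_fin, nsmul_eq_mul]
  linear_combination s * η t *
    (criticalDecay C N γ * W t i c - γ / (C * √(N : ℝ)) * ∑ c', W t i c') * hinv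

lemma isClassFlow (h : IsRegularizedFlow η s γ (criticalDecay C N γ) H W) (hN : 1 ≤ N) (i : m) :
    IsClassFlow η s (criticalDecay C N γ) (γ / (C * √(N : ℝ)))
      (fun t => scaledClassSum (H t) i) (fun t => W t i) where
  hasDerivAt_left _ ht := h.hasDerivAt_scaledClassSum hN ht i
  hasDerivAt_right t ht c := (h.hasDerivAt_right t ht i c).congr_deriv <| by
    rw [mul_transpose_Mmat_apply]
    simp only [smul_eq_mul]
    ring

lemma tendsto_feature_sub_classMean (h : IsRegularizedFlow η s γ (criticalDecay C N γ) H W)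
    (hN : 1 ≤ N) (hrate : 0 < s * criticalDecay C N γ)
    (hζ : ∀ t, 0 ≤ t → HasDerivAt ζ (η t) t) (hζ_top : Tendsto ζ atTop atTop)
    (i : m) (c : Fin C) (n : Fin N) :
    Tendsto (fun t => H t i (c, n) - (√(N : ℝ))⁻¹ * scaledClassSum (H t) i c) atTop (nhds 0) :=
  tendsto_zero_of_hasDerivAt_neg_smul hrate hζ hζ_top fun t ht =>
    ((h.hasDerivAt_feature ht i c n).sub
      ((h.hasDerivAt_scaledClassSum hN ht i c).const_mul _)).congr_deriv <| by
        rw [smul_eq_mul]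
        ring

end IsRegularizedFlow

theorem regularized_critical_decay_limit_general {C N p : ℕ} {γ s : ℝ} {η ζ : ℝ → ℝ}
    {H : ℝ → Matrix (Fin p) (Fin C × Fin N) ℝ} {W : ℝ → Matrix (Fin p) (Fin C) ℝ}
    (hC : 1 ≤ C) (hN : 1 ≤ N) (hγ : 0 < γ) (hγC : γ * ((C : ℝ) - 2) < 2) (hs : 0 < s)
    (hζ : ∀ t, 0 ≤ t → HasDerivAt ζ (η t) t) (hζ_top : Tendsto ζ atTop atTop)
    (h : IsRegularizedFlow η s γ (criticalDecay C N γ) H W) :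
    Tendsto (fun t => frob (H t -
        (H1comp C N 1 (H 0) (W 0) + ((1 - s) / (1 + s)) • H1comp C N (-1) (H 0) (W 0))))
      atTop (nhds 0) ∧
    Tendsto (fun t => frob (W t -
        (Pproj C N 1 (H 0) (W 0) - ((1 - s) / (1 + s)) • Pproj C N (-1) (H 0) (W 0))))
      atTop (nhds 0) := by
  have hs1 : 1 + s ≠ 0 := by positivity
  have hgap := abs_criticalDecay_sub_lt hC hN hγ hγC
  have hrate : 0 < s * criticalDecay C N γ := mul_pos hs ((abs_nonneg _).trans_lt hgap)
  have hclass (i : Fin p) (c : Fin C) :=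
    have : Nonempty (Fin C) := ⟨c⟩
    (h.isClassFlow hN i).tendsto hs (by rwa [Fintype.card_fin]) hζ hζ_top c
  refine ⟨tendsto_frob_sub_zero fun i ⟨c, n⟩ => ?_, tendsto_frob_sub_zero fun i c => ?_⟩
  · have hdev := h.tendsto_feature_sub_classMean hN hrate hζ hζ_top i c n
    rw [H1comp_add_smul_H1comp_apply, Pproj_sub_smul_Pproj_apply hs1]
    simpa only [sub_add_cancel, zero_add, smul_eq_mul] using
      hdev.add ((hclass i c).1.const_mul (√(N : ℝ))⁻¹)
  · rw [Pproj_sub_smul_Pproj_apply hs1]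
    exact (hclass i c).2

/-- **Convergence at the critical weight decay `λ = (1+γ)/(C√N)`.**
The features converge to `H1⁺ + ((1−s)/(1+s))·H1⁻` and the prototypes to
`W1⁺ − ((1−s)/(1+s))·W1⁻` in Frobenius norm. -/
theorem regularized_critical_decay_limit
    (C N p : ℕ) (hC : 1 ≤ C) (hN : 1 ≤ N) (hp : 1 ≤ p) (γ : ℝ)
    (hγ : (C = 2 ∧ 0 < γ) ∨ (2 < C ∧ 0 < γ ∧ γ < 2 / ((C : ℝ) - 2)))
    (lam s : ℝ) (hs : 0 < s)
    (hlam : lam = (1 + γ) / ((C : ℝ) * Real.sqrt N))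
    (η2 : ℝ → ℝ) (hη2 : Continuous η2) (hη2pos : ∀ t, 0 < η2 t)
    (hζ : Tendsto (fun t : ℝ => ∫ τ in (0:ℝ)..t, s * η2 τ) atTop atTop)
    (H : ℝ → Matrix (Fin p) (Fin C × Fin N) ℝ)
    (W : ℝ → Matrix (Fin p) (Fin C) ℝ)
    (hH : ∀ t, 0 ≤ t → ∀ i j,
      HasDerivAt (fun τ => H τ i j)
        ((s * η2 t) * (W t * Mmat C N γ) i j - lam * (s * η2 t) * H t i j) t)
    (hW : ∀ t, 0 ≤ t → ∀ i c,
      HasDerivAt (fun τ => W τ i c)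
        (η2 t * (H t * (Mmat C N γ)ᵀ) i c - lam * η2 t * W t i c) t) :
    Tendsto
      (fun t => frob (H t -
        (H1comp C N 1 (H 0) (W 0) + ((1 - s) / (1 + s)) • H1comp C N (-1) (H 0) (W 0))))
      atTop (nhds 0) ∧
    Tendsto
      (fun t => frob (W t -
        (Pproj C N 1 (H 0) (W 0) - ((1 - s) / (1 + s)) • Pproj C N (-1) (H 0) (W 0))))
      atTop (nhds 0) := by
  subst hlam
  exact regularized_critical_decay_limit_general hC hN (hγ.elim And.right fun h => h.2.1)
    (mul_sub_two_lt_two hγ) hs (fun t _ => (hη2.integral_hasStrictDerivAt 0 t).hasDerivAt)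
    (by simpa only [intervalIntegral.integral_const_mul, tendsto_const_mul_atTop_of_pos hs]
      using hζ)
    ⟨hH, hW⟩
end
end

section
/- Let p ≥ 1 be an integer, let w ∈ ℝ^p with w ≠ 0, let ε > 0, and let η : ℕ → ℝ satisfy η(t) ≥ ε for all t and lim_{t→∞} η(t+1)/η(t) = 1. Let h : ℕ → ℝ^p satisfy h(0) ≠ 0, ⟨w, h(0)⟩/(‖w‖₂·‖h(0)‖₂) > −1, and the recursion h(t+1) = h(t) + (η(t)/‖h(t)‖₂)·( w − (⟨h(t), w⟩/‖h(t)‖₂²)·h(t) ) for every t ∈ ℕ. Assume moreover that the sequence t ↦ η(t)/‖h(t)‖₂ is non-increasing and that η(0)·‖w‖₂ < ‖h(0)‖₂². Then h(t) ≠ 0 for every t, and lim_{t→∞} ‖ h(t)/‖h(t)‖₂ − w/‖w‖₂ ‖₂ = 0. -/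
open scoped BigOperators
open RealInnerProductSpace Filter

/-!
Write `θ` for the angle between `w` and `h`, and `a = η‖w‖/‖h‖²`. As the update direction is
orthogonal to `h`, one step turns `‖h‖²` into `‖h‖²(1 + a² sin² θ)` and `cos θ` into
`(cos θ + a sin² θ)/√(1 + a² sin² θ)`. So the norm never decreases, and `cos θ` never falls below
the minimum of `0` and its initial value; this keeps `h` away from the direction of `-w`.

If the norms stay bounded, they converge; their increments control `sin² θ`, which therefore tends
to `0`. Otherwise the norms tend to infinity, so that eventually `a ≤ 1`, and in this regime `cos θ`
gains at least `a sin² θ / 4` in each step. Since `η/‖h‖` is bounded, `‖h(t)‖² = O(t)` and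
the series of the `a(t)` diverges like the harmonic one; as the total gain is finite, `cos θ` tends
to `1`.
-/

open InnerProductGeometry (angle)
open Real (cos sin)
open scoped Topology

lemma cos_add_mul_sin_sq_le_div_sqrt {a : ℝ} (ha : 0 ≤ a) (ha1 : a ≤ 1) (θ : ℝ) :
    cos θ + a / 4 * sin θ ^ 2 ≤ (cos θ + a * sin θ ^ 2) / √(1 + a ^ 2 * sin θ ^ 2) := by
  have hcos : cos θ ≤ 1 := Real.cos_le_one θ
  have hsin : sin θ ^ 2 ≤ 1 := Real.sin_sq_le_one θ
  have hsin0 : 0 ≤ sin θ ^ 2 := sq_nonneg _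
  generalize sin θ ^ 2 = s at *
  have has : 0 ≤ a * s := by positivity
  have has1 : a * s ≤ 1 := mul_le_one₀ ha1 hsin0 hsin
  have hsqrt : √(1 + a ^ 2 * s) ≤ 1 + a ^ 2 * s / 2 := by
    simpa only [add_comm] using Real.sqrt_one_add_le (by nlinarith : -1 ≤ a ^ 2 * s)
  have hsqrt1 : 1 ≤ √(1 + a ^ 2 * s) := Real.one_le_sqrt.2 (by nlinarith)
  rw [le_div_iff₀ (by positivity)]
  rcases le_total (cos θ + a / 4 * s) 0 with hneg | hpos
  · calc (cos θ + a / 4 * s) * √(1 + a ^ 2 * s)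
        ≤ cos θ + a / 4 * s := mul_le_of_one_le_right hneg hsqrt1
      _ ≤ cos θ + a * s := by linarith
  · have hfactor : (cos θ + a / 4 * s) * a ≤ 5 / 4 := by
      linarith [mul_le_of_le_one_right hpos ha1]
    calc (cos θ + a / 4 * s) * √(1 + a ^ 2 * s)
        ≤ (cos θ + a / 4 * s) * (1 + a ^ 2 * s / 2) := by gcongr
      _ = cos θ + a / 4 * s + (cos θ + a / 4 * s) * a * (a * s) / 2 := by ring
      _ ≤ cos θ + a / 4 * s + 5 / 4 * (a * s) / 2 := by gcongr
      _ ≤ cos θ + a * s := by linarith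

lemma min_zero_le_add_div {c d r : ℝ} (hd : 0 ≤ d) (hr : 1 ≤ r) : min 0 c ≤ (c + d) / r := by
  rcases le_total 0 (c + d) with hpos | hneg
  · exact (min_le_left _ _).trans (by positivity)
  · calc min 0 c ≤ c := min_le_right _ _
      _ ≤ c + d := by linarith
      _ ≤ (c + d) / r := by rw [le_div_iff₀ (by positivity)]; nlinarith

lemma one_add_mul_one_sub_cos_le {m θ : ℝ} (hm : m ≤ cos θ) :
    (1 + m) * (1 - cos θ) ≤ sin θ ^ 2 :=
  calc (1 + m) * (1 - cos θ) ≤ (1 + cos θ) * (1 - cos θ) := by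
        have := sub_nonneg.2 (Real.cos_le_one θ)
        gcongr
    _ = sin θ ^ 2 := by rw [Real.sin_sq]; ring

lemma tendsto_cos_one_of_tendsto_sin_sq {ι : Type*} {l : Filter ι} {θ : ι → ℝ} {m : ℝ}
    (hm : -1 < m) (hcos : ∀ t, m ≤ cos (θ t)) (hsin : Tendsto (fun t => sin (θ t) ^ 2) l (𝓝 0)) :
    Tendsto (fun t => cos (θ t)) l (𝓝 1) := by
  have hm' : 0 < 1 + m := by linarith
  have hlower : Tendsto (fun t => 1 - sin (θ t) ^ 2 / (1 + m)) l (𝓝 1) := by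
    simpa using (hsin.div_const (1 + m)).const_sub 1
  refine tendsto_of_tendsto_of_tendsto_of_le_of_le hlower tendsto_const_nhds (fun t => ?_)
    fun t => Real.cos_le_one (θ t)
  have : 1 - cos (θ t) ≤ sin (θ t) ^ 2 / (1 + m) :=
    (le_div_iff₀' hm').2 (one_add_mul_one_sub_cos_le (hcos t))
  linarith

lemma tendsto_cos_one_of_not_summable {θ a : ℕ → ℝ} (hθ : -1 < cos (θ 0)) (ha : ∀ t, 0 ≤ a t)
    (hdiv : ¬ Summable a) (hgain : ∀ t, cos (θ t) + a t * sin (θ t) ^ 2 ≤ cos (θ (t + 1))) :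
    Tendsto (fun t => cos (θ t)) atTop (𝓝 1) := by
  have hmono : Monotone fun t => cos (θ t) := monotone_nat_of_le_succ fun t =>
    (le_add_of_nonneg_right (mul_nonneg (ha t) (sq_nonneg _))).trans (hgain t)
  have hlub : IsLUB (Set.range fun t => cos (θ t)) 1 := by
    refine ⟨Set.forall_mem_range.2 fun t => Real.cos_le_one (θ t), fun L hL => ?_⟩
    by_contra! hL1
    have hk : 0 < (1 + cos (θ 0)) * (1 - L) := mul_pos (by linarith) (by linarith)
    have hsin (t : ℕ) : (1 + cos (θ 0)) * (1 - L) ≤ sin (θ t) ^ 2 := by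
      have hcos : cos (θ t) ≤ L := hL (Set.mem_range_self t)
      refine le_trans ?_ (one_add_mul_one_sub_cos_le (hmono (Nat.zero_le t)))
      gcongr
      linarith
    have hsum (n : ℕ) :
        ∑ t ∈ Finset.range n, a t * ((1 + cos (θ 0)) * (1 - L)) ≤ 1 - cos (θ 0) :=
      calc ∑ t ∈ Finset.range n, a t * ((1 + cos (θ 0)) * (1 - L))
          ≤ ∑ t ∈ Finset.range n, (cos (θ (t + 1)) - cos (θ t)) :=
            Finset.sum_le_sum fun t _ => by
              linarith [hgain t, mul_le_mul_of_nonneg_left (hsin t) (ha t)]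
        _ = cos (θ n) - cos (θ 0) := Finset.sum_range_sub (fun t => cos (θ t)) n
        _ ≤ 1 - cos (θ 0) := sub_le_sub_right (Real.cos_le_one _) _
    exact hdiv ((summable_mul_right_iff hk.ne').1
      (summable_of_sum_range_le (fun t => mul_nonneg (ha t) hk.le) hsum))
  exact tendsto_atTop_isLUB hmono hlub

lemma not_summable_of_div_natCast_add_one_le {a : ℕ → ℝ} {m : ℝ} (hm : 0 < m)
    (ha : ∀ t : ℕ, m / (t + 1) ≤ a t) : ¬ Summable a := fun hsum => by
  have hharm : Summable fun t : ℕ => m * (1 / ((t + 1 : ℕ) : ℝ)) :=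
    hsum.of_nonneg_of_le (fun t => by positivity) fun t => by
      simpa only [mul_one_div, Nat.cast_add, Nat.cast_one] using ha t
  exact Real.not_summable_one_div_natCast
    ((summable_nat_add_iff 1).1 ((summable_mul_left_iff hm.ne').1 hharm))

variable {E : Type*} [NormedAddCommGroup E]

/-- The dimensionless step size `a = η‖w‖/‖x‖²`. For gradient ascent of the normalized alignment
with `w`, at learning rate `η`, the step from `x` has length `a * sin (angle w x) * ‖x‖`. -/
noncomputable def relativeStep (η : ℝ) (w x : E) : ℝ := η * ‖w‖ / ‖x‖ ^ 2

lemma relativeStep_nonneg {η : ℝ} (hη : 0 ≤ η) (w x : E) : 0 ≤ relativeStep η w x := by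
  unfold relativeStep
  positivity

lemma tendsto_relativeStep_zero {ι : Type*} {l : Filter ι} {η : ι → ℝ} {h : ι → E} {B : ℝ} (w : E)
    (hη : ∀ t, 0 ≤ η t) (hB : ∀ t, η t / ‖h t‖ ≤ B) (hnorm : Tendsto (fun t => ‖h t‖) l atTop) :
    Tendsto (fun t => relativeStep (η t) w (h t)) l (𝓝 0) := by
  refine squeeze_zero (fun t => relativeStep_nonneg (hη t) w (h t)) (fun t => ?_)
    (hnorm.const_div_atTop (B * ‖w‖))
  calc relativeStep (η t) w (h t) = η t / ‖h t‖ * ‖w‖ / ‖h t‖ := by rw [relativeStep]; ring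
    _ ≤ B * ‖w‖ / ‖h t‖ := by gcongr; exact hB t

variable [InnerProductSpace ℝ E]

/-- The component of `w` orthogonal to `x`. For `x ≠ 0` it is `‖x‖` times the gradient at `x` of
the normalized alignment `x ↦ ⟪w, x⟫ / ‖x‖`; for `x = 0` it is `w`. -/
noncomputable def orthogonalPart (w x : E) : E := w - (⟪x, w⟫ / ‖x‖ ^ 2) • x

/-- One step of gradient ascent, with learning rate `η`, of the normalized alignment with `w`. -/
noncomputable def alignmentStep (η : ℝ) (w x : E) : E := x + (η / ‖x‖) • orthogonalPart w x

section Step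

lemma inner_orthogonalPart_eq_zero (w x : E) : ⟪x, orthogonalPart w x⟫ = 0 := by
  rcases eq_or_ne x 0 with rfl | hx
  · exact inner_zero_left _
  · have : ‖x‖ ≠ 0 := norm_ne_zero_iff.2 hx
    rw [orthogonalPart, inner_sub_right, real_inner_smul_right, real_inner_self_eq_norm_sq]
    field_simp
    ring

lemma inner_orthogonalPart_eq_norm_mul_sin_sq (w x : E) :
    ⟪w, orthogonalPart w x⟫ = (‖w‖ * sin (angle w x)) ^ 2 := by
  rcases eq_or_ne x 0 with rfl | hx
  · simp [orthogonalPart]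
  · have : ‖x‖ ≠ 0 := norm_ne_zero_iff.2 hx
    rw [orthogonalPart, inner_sub_right, real_inner_smul_right, real_inner_self_eq_norm_sq,
      real_inner_comm, ← InnerProductGeometry.cos_angle_mul_norm_mul_norm w x, mul_pow,
      Real.sin_sq]
    field_simp

lemma norm_orthogonalPart_sq (w x : E) :
    ‖orthogonalPart w x‖ ^ 2 = (‖w‖ * sin (angle w x)) ^ 2 := by
  rw [← inner_orthogonalPart_eq_norm_mul_sin_sq, ← real_inner_self_eq_norm_sq]
  nth_rw 1 [orthogonalPart]
  rw [inner_sub_left, real_inner_smul_left, inner_orthogonalPart_eq_zero, mul_zero, sub_zero]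

lemma norm_alignmentStep_sq (η : ℝ) (w x : E) :
    ‖alignmentStep η w x‖ ^ 2 = ‖x‖ ^ 2 + (η / ‖x‖ * ‖w‖) ^ 2 * sin (angle w x) ^ 2 := by
  rw [alignmentStep, norm_add_sq_real, real_inner_smul_right, inner_orthogonalPart_eq_zero,
    norm_smul, mul_pow, norm_orthogonalPart_sq, Real.norm_eq_abs, sq_abs]
  ring

lemma norm_le_norm_alignmentStep (η : ℝ) (w x : E) : ‖x‖ ≤ ‖alignmentStep η w x‖ := by
  refine le_of_sq_le_sq ?_ (norm_nonneg _)
  rw [norm_alignmentStep_sq]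
  exact le_add_of_nonneg_right (by positivity)

variable {w x : E}

lemma norm_alignmentStep (η : ℝ) (hx : x ≠ 0) :
    ‖alignmentStep η w x‖ = ‖x‖ * √(1 + relativeStep η w x ^ 2 * sin (angle w x) ^ 2) := by
  have : ‖x‖ ≠ 0 := norm_ne_zero_iff.2 hx
  rw [← sq_eq_sq₀ (norm_nonneg _) (by positivity), norm_alignmentStep_sq, mul_pow ‖x‖,
    Real.sq_sqrt (by positivity), relativeStep]
  field_simp

lemma inner_alignmentStep (η : ℝ) (hx : x ≠ 0) :
    ⟪w, alignmentStep η w x⟫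
      = ‖w‖ * ‖x‖ * (cos (angle w x) + relativeStep η w x * sin (angle w x) ^ 2) := by
  have : ‖x‖ ≠ 0 := norm_ne_zero_iff.2 hx
  rw [alignmentStep, inner_add_right, real_inner_smul_right,
    inner_orthogonalPart_eq_norm_mul_sin_sq,
    ← InnerProductGeometry.cos_angle_mul_norm_mul_norm w x, relativeStep]
  field_simp

lemma cos_angle_alignmentStep (η : ℝ) (hw : w ≠ 0) (hx : x ≠ 0) :
    cos (angle w (alignmentStep η w x))
      = (cos (angle w x) + relativeStep η w x * sin (angle w x) ^ 2)
        / √(1 + relativeStep η w x ^ 2 * sin (angle w x) ^ 2) := by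
  have : ‖w‖ * ‖x‖ ≠ 0 := mul_ne_zero (norm_ne_zero_iff.2 hw) (norm_ne_zero_iff.2 hx)
  rw [InnerProductGeometry.cos_angle, inner_alignmentStep η hx, norm_alignmentStep η hx,
    ← mul_assoc, mul_div_mul_left _ _ this]

lemma norm_normalize_sub_normalize_sq (hw : w ≠ 0) (hx : x ≠ 0) :
    ‖(‖x‖⁻¹ • x) - (‖w‖⁻¹ • w)‖ ^ 2 = 2 - 2 * cos (angle w x) := by
  have hnorm {y : E} (hy : y ≠ 0) : ‖‖y‖⁻¹ • y‖ = 1 := norm_smul_inv_norm (𝕜 := ℝ) hy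
  have hinv {y : E} (hy : y ≠ 0) : 0 < ‖y‖⁻¹ := inv_pos.2 (norm_pos_iff.2 hy)
  rw [norm_sub_sq_real, ← InnerProductGeometry.cos_angle_mul_norm_mul_norm,
    InnerProductGeometry.angle_smul_left_of_pos _ _ (hinv hx),
    InnerProductGeometry.angle_smul_right_of_pos _ _ (hinv hw),
    InnerProductGeometry.angle_comm, hnorm hx, hnorm hw]
  ring

end Step

section Iterates

variable {w : E} {η : ℕ → ℝ} {h : ℕ → E}

lemma monotone_norm_iterates (hrec : ∀ t, h (t + 1) = alignmentStep (η t) w (h t)) :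
    Monotone fun t => ‖h t‖ :=
  monotone_nat_of_le_succ fun t => by
    rw [hrec t]
    exact norm_le_norm_alignmentStep _ _ _

lemma iterates_ne_zero (h0 : h 0 ≠ 0) (hrec : ∀ t, h (t + 1) = alignmentStep (η t) w (h t))
    (t : ℕ) : h t ≠ 0 :=
  norm_pos_iff.1 ((norm_pos_iff.2 h0).trans_le (monotone_norm_iterates hrec (Nat.zero_le t)))

lemma norm_iterates_sq_le {B : ℝ} (hη : ∀ t, 0 ≤ η t) (hB : ∀ t, η t / ‖h t‖ ≤ B)
    (hrec : ∀ t, h (t + 1) = alignmentStep (η t) w (h t)) (t : ℕ) :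
    ‖h t‖ ^ 2 ≤ ‖h 0‖ ^ 2 + t * (B * ‖w‖) ^ 2 := by
  induction t with
  | zero => simp
  | succ t ih =>
    have hη' := hη t
    calc ‖h (t + 1)‖ ^ 2
        = ‖h t‖ ^ 2 + (η t / ‖h t‖ * ‖w‖) ^ 2 * sin (angle w (h t)) ^ 2 := by
          rw [hrec t, norm_alignmentStep_sq]
      _ ≤ ‖h 0‖ ^ 2 + t * (B * ‖w‖) ^ 2 + (B * ‖w‖) ^ 2 * 1 := by
          gcongr
          · exact hB t
          · exact Real.sin_sq_le_one _
      _ = ‖h 0‖ ^ 2 + (t + 1 : ℕ) * (B * ‖w‖) ^ 2 := by push_cast; ring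

lemma not_summable_relativeStep {ε B : ℝ} (hw : w ≠ 0) (hε : 0 < ε) (hη : ∀ t, ε ≤ η t)
    (hB : ∀ t, η t / ‖h t‖ ≤ B) (h0 : h 0 ≠ 0)
    (hrec : ∀ t, h (t + 1) = alignmentStep (η t) w (h t)) :
    ¬ Summable fun t => relativeStep (η t) w (h t) := by
  have : 0 < ‖w‖ := norm_pos_iff.2 hw
  have : 0 < ‖h 0‖ := norm_pos_iff.2 h0
  have hη0 (t : ℕ) : 0 ≤ η t := hε.le.trans (hη t)
  refine not_summable_of_div_natCast_add_one_le
    (m := ε * ‖w‖ / (‖h 0‖ ^ 2 + (B * ‖w‖) ^ 2)) (by positivity) fun t => ?_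
  have hgrow : ‖h t‖ ^ 2 ≤ (‖h 0‖ ^ 2 + (B * ‖w‖) ^ 2) * (t + 1) := by
    have : 0 ≤ t * ‖h 0‖ ^ 2 + (B * ‖w‖) ^ 2 := by positivity
    linarith [norm_iterates_sq_le hη0 hB hrec t]
  have hpos : 0 < ‖h t‖ := norm_pos_iff.2 (iterates_ne_zero h0 hrec t)
  have hη0' := hη0 t
  rw [relativeStep, div_div]
  gcongr
  exact hη t

lemma min_zero_cos_le_cos_iterates (hw : w ≠ 0) (hη : ∀ t, 0 ≤ η t) (h0 : h 0 ≠ 0)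
    (hrec : ∀ t, h (t + 1) = alignmentStep (η t) w (h t)) (t : ℕ) :
    min 0 (cos (angle w (h 0))) ≤ cos (angle w (h t)) := by
  induction t with
  | zero => exact min_le_right _ _
  | succ t ih =>
    rw [hrec t, cos_angle_alignmentStep _ hw (iterates_ne_zero h0 hrec t)]
    exact (le_min (min_le_left _ _) ih).trans <| min_zero_le_add_div
      (mul_nonneg (relativeStep_nonneg (hη t) _ _) (sq_nonneg _))
      (Real.one_le_sqrt.2 (le_add_of_nonneg_right (by positivity)))

lemma tendsto_cos_iterates_of_tendsto_norm_nhds {ε M : ℝ} (hw : w ≠ 0) (hε : 0 < ε)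
    (hη : ∀ t, ε ≤ η t) (h0 : h 0 ≠ 0) (hcos : -1 < cos (angle w (h 0)))
    (hrec : ∀ t, h (t + 1) = alignmentStep (η t) w (h t))
    (hnorm : Tendsto (fun t => ‖h t‖) atTop (𝓝 M)) :
    Tendsto (fun t => cos (angle w (h t))) atTop (𝓝 1) := by
  have : 0 < ‖w‖ := norm_pos_iff.2 hw
  have hpos (t : ℕ) : 0 < ‖h t‖ := norm_pos_iff.2 (iterates_ne_zero h0 hrec t)
  have hle (t : ℕ) : ‖h t‖ ≤ M := (monotone_norm_iterates hrec).ge_of_tendsto hnorm t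
  have hM : 0 < M := (hpos 0).trans_le (hle 0)
  have hk : 0 < (ε / M * ‖w‖) ^ 2 := by positivity
  have hincr : Tendsto (fun t => ‖h (t + 1)‖ ^ 2 - ‖h t‖ ^ 2) atTop (𝓝 0) := by
    simpa using ((tendsto_add_atTop_iff_nat 1).2 (hnorm.pow 2)).sub (hnorm.pow 2)
  have hsin_le (t : ℕ) :
      sin (angle w (h t)) ^ 2 ≤ (‖h (t + 1)‖ ^ 2 - ‖h t‖ ^ 2) / (ε / M * ‖w‖) ^ 2 := by
    rw [le_div_iff₀' hk, hrec t, norm_alignmentStep_sq, add_sub_cancel_left]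
    have := hpos t
    have := hε.le.trans (hη t)
    gcongr
    · exact hη t
    · exact hle t
  refine tendsto_cos_one_of_tendsto_sin_sq (lt_min (by norm_num) hcos)
    (min_zero_cos_le_cos_iterates hw (fun t => hε.le.trans (hη t)) h0 hrec) ?_
  exact squeeze_zero (fun t => sq_nonneg _) hsin_le (by simpa using hincr.div_const _)

lemma tendsto_cos_iterates_of_tendsto_norm_atTop {ε B : ℝ} (hw : w ≠ 0) (hε : 0 < ε)
    (hη : ∀ t, ε ≤ η t) (hB : ∀ t, η t / ‖h t‖ ≤ B) (h0 : h 0 ≠ 0)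
    (hcos : -1 < cos (angle w (h 0)))
    (hrec : ∀ t, h (t + 1) = alignmentStep (η t) w (h t))
    (hnorm : Tendsto (fun t => ‖h t‖) atTop atTop) :
    Tendsto (fun t => cos (angle w (h t))) atTop (𝓝 1) := by
  have hη0 (t : ℕ) : 0 ≤ η t := hε.le.trans (hη t)
  have hne := iterates_ne_zero h0 hrec
  have ha (t : ℕ) : 0 ≤ relativeStep (η t) w (h t) := relativeStep_nonneg (hη0 t) _ _
  obtain ⟨T, hT⟩ := eventually_atTop.1
    ((tendsto_relativeStep_zero w hη0 hB hnorm).eventually_le_const one_pos)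
  have hdiv : ¬ Summable fun t => relativeStep (η (t + T)) w (h (t + T)) / 4 := by
    rw [summable_div_const_iff four_ne_zero,
      summable_nat_add_iff (f := fun t => relativeStep (η t) w (h t)) T]
    exact not_summable_relativeStep hw hε hη hB h0 hrec
  refine (tendsto_add_atTop_iff_nat T).1 (tendsto_cos_one_of_not_summable
    (θ := fun t => angle w (h (t + T))) ?_ (fun t => by linarith [ha (t + T)]) hdiv fun t => ?_)
  · exact (lt_min (by norm_num) hcos).trans_le (min_zero_cos_le_cos_iterates hw hη0 h0 hrec _)
  · rw [Nat.add_right_comm, hrec, cos_angle_alignmentStep _ hw (hne _)]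
    exact cos_add_mul_sin_sq_le_div_sqrt (ha _) (hT _ (Nat.le_add_left T t)) _

lemma tendsto_cos_iterates {ε : ℝ} (hw : w ≠ 0) (hε : 0 < ε) (hη : ∀ t, ε ≤ η t)
    (hbdd : BddAbove (Set.range fun t => η t / ‖h t‖)) (h0 : h 0 ≠ 0)
    (hcos : -1 < cos (angle w (h 0)))
    (hrec : ∀ t, h (t + 1) = alignmentStep (η t) w (h t)) :
    Tendsto (fun t => cos (angle w (h t))) atTop (𝓝 1) := by
  obtain ⟨B, hB⟩ := hbdd
  rcases tendsto_atTop_of_monotone (monotone_norm_iterates hrec) with hnorm | ⟨M, hnorm⟩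
  · exact tendsto_cos_iterates_of_tendsto_norm_atTop hw hε hη (Set.forall_mem_range.1 hB) h0 hcos
      hrec hnorm
  · exact tendsto_cos_iterates_of_tendsto_norm_nhds hw hε hη h0 hcos hrec hnorm

end Iterates

theorem spherical_single_vector_convergence_general {w : E} (hw : w ≠ 0) {ε : ℝ} (hε : 0 < ε)
    {η : ℕ → ℝ} (hη : ∀ t, ε ≤ η t) {h : ℕ → E} (h0 : h 0 ≠ 0)
    (hcos : -1 < ⟪w, h 0⟫ / (‖w‖ * ‖h 0‖))
    (hrec : ∀ t, h (t + 1) = h t + (η t / ‖h t‖) • (w - (⟪h t, w⟫ / ‖h t‖ ^ 2) • h t))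
    (hbdd : BddAbove (Set.range fun t => η t / ‖h t‖)) :
    (∀ t, h t ≠ 0) ∧ Tendsto (fun t => ‖(‖h t‖⁻¹ • h t) - (‖w‖⁻¹ • w)‖) atTop (𝓝 0) := by
  have hne : ∀ t, h t ≠ 0 := iterates_ne_zero h0 hrec
  rw [← InnerProductGeometry.cos_angle] at hcos
  have hlim : Tendsto (fun t => √(2 - 2 * cos (angle w (h t)))) atTop (𝓝 0) := by
    simpa using (((tendsto_cos_iterates hw hε hη hbdd h0 hcos hrec).const_mul 2).const_sub 2).sqrt
  refine ⟨hne, hlim.congr fun t => ?_⟩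
  rw [← norm_normalize_sub_normalize_sq hw (hne t), Real.sqrt_sq (norm_nonneg _)]

/-- **Convergence of projected gradient ascent of the normalized alignment.**
Under the recursion `h(t+1) = h(t) + (η(t)/‖h(t)‖)·(w − (⟪h(t),w⟫/‖h(t)‖²)·h(t))`,
with a bounded-below learning rate whose consecutive ratios tend to `1`,
`η(t)/‖h(t)‖` non-increasing and `η(0)·‖w‖ < ‖h(0)‖²`, starting from a point whose
cosine similarity with `w` exceeds `−1`, the iterates never vanish and their
normalizations converge to `w/‖w‖`. -/
theorem spherical_single_vector_convergence
    (p : ℕ) (hp : 1 ≤ p)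
    (w : EuclideanSpace ℝ (Fin p)) (hw : w ≠ 0)
    (ε : ℝ) (hε : 0 < ε)
    (η : ℕ → ℝ) (hη : ∀ t, ε ≤ η t)
    (hηratio : Tendsto (fun t => η (t + 1) / η t) atTop (nhds 1))
    (h : ℕ → EuclideanSpace ℝ (Fin p))
    (h0 : h 0 ≠ 0)
    (hcos : ⟪w, h 0⟫ / (‖w‖ * ‖h 0‖) > -1)
    (hrec : ∀ t : ℕ,
      h (t + 1) = h t + (η t / ‖h t‖) • (w - (⟪h t, w⟫ / ‖h t‖ ^ 2) • h t))
    (hmono : Antitone fun t => η t / ‖h t‖)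
    (hinit : η 0 * ‖w‖ < ‖h 0‖ ^ 2) :
    (∀ t, h t ≠ 0) ∧
    Tendsto (fun t => ‖(‖h t‖⁻¹ • h t) - (‖w‖⁻¹ • w)‖) atTop (nhds 0) :=
  spherical_single_vector_convergence_general hw hε hη h0 hcos hrec
    ⟨η 0 / ‖h 0‖, Set.forall_mem_range.2 fun t => hmono (Nat.zero_le t)⟩
end

section
/- Let C, N, p ≥ 1 be integers, γ > 0, and ε0 > 0. Let w_1,…,w_C ∈ ℝ^p be nonzero vectors, and let η : ℕ → ℝ satisfy η(t) ≥ ε0 for all t and lim_{t→∞} η(t+1)/η(t) = 1. For each i ∈ [N] and c ∈ [C], let h_{i,c} : ℕ → ℝ^p satisfy h_{i,c}(0) ≠ 0, ⟨w_c, h_{i,c}(0)⟩/(‖w_c‖₂·‖h_{i,c}(0)‖₂) > −1, and the recursion h_{i,c}(t+1) = h_{i,c}(t) + ((1+γ)·η(t)/(C·N·‖h_{i,c}(t)‖₂))·( w_c − (⟨h_{i,c}(t), w_c⟩/‖h_{i,c}(t)‖₂²)·h_{i,c}(t) ) for every t ∈ ℕ. Assume that for each (i,c) the sequence t ↦ η(t)/‖h_{i,c}(t)‖₂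 is non-increasing and that (1+γ)·η(0)·‖w_c‖₂/(C·N) ≤ ‖h_{i,c}(0)‖₂². Then for every i ∈ [N] and c ∈ [C], h_{i,c}(t) ≠ 0 for all t and lim_{t→∞} ‖ h_{i,c}(t)/‖h_{i,c}(t)‖₂ − w_c/‖w_c‖₂ ‖₂ = 0; equivalently, the matrix of ℓ₂-normalized feature columns converges to the matrix whose (c,i)-th column is the normalized prototype w_c/‖w_c‖₂. -/
open scoped BigOperators
open RealInnerProductSpace Filter

/-!
The update direction is the component `T` of `w` orthogonal to the feature `h`. Along
`h' = h + α • T` one has `‖h'‖² = ‖h‖² + α² ‖T‖²` and `⟪h', w⟫ = ⟪h, w⟫ + α ‖T‖²`, so if `0 ≤ α ≤ A`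
then `‖h‖²` grows at most `A` times as fast as `⟪h, w⟫`. As `⟪h, w⟫ ≤ ‖h‖ ‖w‖` is only linear in the
norm, `‖h‖` stays bounded. Hence the step sizes `α = k η / ‖h‖` stay away from `0`, the bounded
increasing sequence `⟪h, w⟫` has vanishing increments `α ‖T‖²`, and `T → 0`: the direction of `h`
approaches the line spanned by `w`. It cannot approach `-w`, because while `⟪h, w⟫ ≤ 0` the Gram
determinant `‖h‖² ‖T‖²` of `h` and `w` does not decrease.
-/

section TangentialPart

variable {E : Type*} [NormedAddCommGroup E] [InnerProductSpace ℝ E] {h w : E} {α : ℝ}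

/-- The component of `w` orthogonal to `h`, i.e. tangent at `h` to the sphere through `h`; by the
convention `x / 0 = 0` it is `w` itself when `h = 0`. -/
noncomputable def tangentialPart (h w : E) : E :=
  w - (⟪h, w⟫ / ‖h‖ ^ 2) • h

lemma inner_self_tangentialPart (h w : E) : ⟪h, tangentialPart h w⟫ = 0 := by
  rcases eq_or_ne h 0 with rfl | hh
  · exact inner_zero_left _
  · rw [tangentialPart, inner_sub_right, real_inner_smul_right, real_inner_self_eq_norm_sq]
    field_simp
    ring

lemma inner_tangentialPart_right (h w : E) :
    ⟪tangentialPart h w, w⟫ = ‖tangentialPart h w‖ ^ 2 := by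
  have hw : w = tangentialPart h w + (⟪h, w⟫ / ‖h‖ ^ 2) • h := (sub_add_cancel _ _).symm
  nth_rw 2 [hw]
  rw [inner_add_right, real_inner_smul_right, real_inner_self_eq_norm_sq,
    real_inner_comm h (tangentialPart h w), inner_self_tangentialPart, mul_zero, add_zero]

lemma norm_tangentialPart_le (h w : E) : ‖tangentialPart h w‖ ≤ ‖w‖ := by
  have hle := real_inner_le_norm (tangentialPart h w) w
  rw [inner_tangentialPart_right] at hle
  nlinarith [norm_nonneg (tangentialPart h w), norm_nonneg w]

lemma norm_sq_mul_norm_tangentialPart_sq (h w : E) :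
    ‖h‖ ^ 2 * ‖tangentialPart h w‖ ^ 2 = ‖h‖ ^ 2 * ‖w‖ ^ 2 - ⟪h, w⟫ ^ 2 := by
  rcases eq_or_ne h 0 with rfl | hh
  · simp
  · rw [← inner_tangentialPart_right, tangentialPart, inner_sub_left, real_inner_smul_left,
      real_inner_self_eq_norm_sq]
    field_simp

lemma tangentialPart_ne_zero_of_abs_inner_lt (hlt : |⟪h, w⟫| < ‖h‖ * ‖w‖) :
    tangentialPart h w ≠ 0 := by
  intro hzero
  have hgram := norm_sq_mul_norm_tangentialPart_sq h w
  have hsq : ⟪h, w⟫ ^ 2 < (‖h‖ * ‖w‖) ^ 2 := sq_lt_sq' (abs_lt.mp hlt).1 (abs_lt.mp hlt).2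
  rw [hzero, norm_zero] at hgram
  linarith

/-- With `x` the cosine of the angle between `h` and `w`, the squared left-hand side is
`2 (1 - x) ≤ 2 (1 - x) (1 + x)`, and `1 - x ^ 2` is the squared ratio on the right. -/
lemma norm_normalized_sub_normalized_le (hh : h ≠ 0) (hw : w ≠ 0) (hinner : 0 ≤ ⟪h, w⟫) :
    ‖(‖h‖⁻¹ • h) - (‖w‖⁻¹ • w)‖ ≤ √2 * (‖tangentialPart h w‖ / ‖w‖) := by
  set x := ⟪h, w⟫ / (‖h‖ * ‖w‖) with hx
  have hx0 : 0 ≤ x := by positivity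
  have hx1 : x ≤ 1 := (abs_le.mp (abs_real_inner_div_norm_mul_norm_le_one h w)).2
  have hdist : ‖(‖h‖⁻¹ • h) - (‖w‖⁻¹ • w)‖ ^ 2 = 2 - 2 * x := by
    have hunit : ∀ {v : E}, v ≠ 0 → ‖‖v‖⁻¹ • v‖ = 1 := fun hv => norm_smul_inv_norm (𝕜 := ℝ) hv
    rw [norm_sub_sq_real, hunit hh, hunit hw, real_inner_smul_left, real_inner_smul_right, hx]
    field_simp
    ring
  have hsin : (‖tangentialPart h w‖ / ‖w‖) ^ 2 = 1 - x ^ 2 := by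
    have hgram := norm_sq_mul_norm_tangentialPart_sq h w
    rw [hx]
    field_simp
    linarith
  refine le_of_sq_le_sq ?_ (by positivity)
  rw [mul_pow, Real.sq_sqrt zero_le_two, hdist, hsin]
  nlinarith

lemma norm_add_smul_tangentialPart_sq (h w : E) (α : ℝ) :
    ‖h + α • tangentialPart h w‖ ^ 2 = ‖h‖ ^ 2 + α ^ 2 * ‖tangentialPart h w‖ ^ 2 := by
  rw [norm_add_sq_real, real_inner_smul_right, inner_self_tangentialPart, norm_smul, mul_pow,
    Real.norm_eq_abs, sq_abs]
  ring

lemma inner_add_smul_tangentialPart (h w : E) (α : ℝ) :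
    ⟪h + α • tangentialPart h w, w⟫ = ⟪h, w⟫ + α * ‖tangentialPart h w‖ ^ 2 := by
  rw [inner_add_left, real_inner_smul_left, inner_tangentialPart_right]

lemma norm_le_norm_add_smul_tangentialPart (h w : E) (α : ℝ) :
    ‖h‖ ≤ ‖h + α • tangentialPart h w‖ := by
  refine le_of_sq_le_sq ?_ (norm_nonneg _)
  rw [norm_add_smul_tangentialPart_sq]
  exact le_add_of_nonneg_right (by positivity)

lemma norm_mul_norm_tangentialPart_le_add_smul (hα : 0 ≤ α) (hinner : ⟪h, w⟫ ≤ 0) :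
    ‖h‖ * ‖tangentialPart h w‖ ≤
      ‖h + α • tangentialPart h w‖ * ‖tangentialPart (h + α • tangentialPart h w) w‖ := by
  set T := tangentialPart h w
  refine le_of_sq_le_sq ?_ (by positivity)
  have hT : ‖T‖ ^ 2 ≤ ‖w‖ ^ 2 := by gcongr; exact norm_tangentialPart_le h w
  have hgain : 0 ≤ α ^ 2 * ‖T‖ ^ 2 * (‖w‖ ^ 2 - ‖T‖ ^ 2) :=
    mul_nonneg (by positivity) (sub_nonneg.mpr hT)
  have hcross : α * ‖T‖ ^ 2 * ⟪h, w⟫ ≤ 0 := mul_nonpos_of_nonneg_of_nonpos (by positivity) hinner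
  calc (‖h‖ * ‖T‖) ^ 2 = ‖h‖ ^ 2 * ‖w‖ ^ 2 - ⟪h, w⟫ ^ 2 := by
        rw [mul_pow, norm_sq_mul_norm_tangentialPart_sq]
    _ ≤ (‖h‖ ^ 2 + α ^ 2 * ‖T‖ ^ 2) * ‖w‖ ^ 2 - (⟪h, w⟫ + α * ‖T‖ ^ 2) ^ 2 := by linarith
    _ = (‖h + α • T‖ * ‖tangentialPart (h + α • T) w‖) ^ 2 := by
        rw [mul_pow, norm_sq_mul_norm_tangentialPart_sq, norm_add_smul_tangentialPart_sq,
          inner_add_smul_tangentialPart]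

end TangentialPart

/-- `h` is a run of gradient ascent, with step sizes `α`, in the direction of the tangential part
of the fixed vector `w`. The spherically constrained gradient descent of the unhinged objective has
this form with `α t = k * η t / ‖h t‖`. -/
def IsTangentialAscent {E : Type*} [NormedAddCommGroup E] [InnerProductSpace ℝ E]
    (w : E) (α : ℕ → ℝ) (h : ℕ → E) : Prop :=
  ∀ t, h (t + 1) = h t + α t • tangentialPart (h t) w

namespace IsTangentialAscent

variable {E : Type*} [NormedAddCommGroup E] [InnerProductSpace ℝ E] {w : E} {α : ℕ → ℝ}
  {h : ℕ → E} {a A : ℝ}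

lemma monotone_norm (hrun : IsTangentialAscent w α h) : Monotone fun t => ‖h t‖ :=
  monotone_nat_of_le_succ fun t => by
    rw [hrun t]
    exact norm_le_norm_add_smul_tangentialPart _ _ _

lemma ne_zero (hrun : IsTangentialAscent w α h) (h0 : h 0 ≠ 0) (t : ℕ) : h t ≠ 0 :=
  norm_pos_iff.mp <| (norm_pos_iff.mpr h0).trans_le (hrun.monotone_norm t.zero_le)

lemma inner_succ_sub_inner (hrun : IsTangentialAscent w α h) (t : ℕ) :
    ⟪h (t + 1), w⟫ - ⟪h t, w⟫ = α t * ‖tangentialPart (h t) w‖ ^ 2 := by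
  rw [hrun t, inner_add_smul_tangentialPart, add_sub_cancel_left]

lemma monotone_inner (hrun : IsTangentialAscent w α h) (hα : ∀ t, 0 ≤ α t) :
    Monotone fun t => ⟪h t, w⟫ :=
  monotone_nat_of_le_succ fun t => by
    rw [← sub_nonneg, hrun.inner_succ_sub_inner]
    exact mul_nonneg (hα t) (sq_nonneg _)

lemma norm_sq_sub_norm_sq_le (hrun : IsTangentialAscent w α h) (hα : ∀ t, 0 ≤ α t)
    (hA : ∀ t, α t ≤ A) (t : ℕ) :
    ‖h t‖ ^ 2 - ‖h 0‖ ^ 2 ≤ A * (⟪h t, w⟫ - ⟪h 0, w⟫) := by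
  induction t with
  | zero => simp
  | succ t ih =>
    have hstep : ‖h (t + 1)‖ ^ 2 - ‖h t‖ ^ 2 ≤ A * (⟪h (t + 1), w⟫ - ⟪h t, w⟫) := by
      rw [hrun.inner_succ_sub_inner, hrun t, norm_add_smul_tangentialPart_sq, add_sub_cancel_left,
        sq, mul_assoc]
      have := hα t
      gcongr
      exact hA t
    linarith

lemma norm_le (hrun : IsTangentialAscent w α h) (hα : ∀ t, 0 ≤ α t) (hA : ∀ t, α t ≤ A) (t : ℕ) :
    ‖h t‖ ≤ ‖h 0‖ + A * ‖w‖ := by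
  have hA0 : 0 ≤ A := (hα 0).trans (hA 0)
  have hinner : ⟪h t, w⟫ - ⟪h 0, w⟫ ≤ (‖h t‖ + ‖h 0‖) * ‖w‖ := by
    linarith [real_inner_le_norm (h t) w, (abs_le.mp (abs_real_inner_le_norm (h 0) w)).1]
  have hfactor : (‖h t‖ + ‖h 0‖) * (‖h t‖ - ‖h 0‖) ≤ (‖h t‖ + ‖h 0‖) * (A * ‖w‖) := by
    linarith [hrun.norm_sq_sub_norm_sq_le hα hA t, mul_le_mul_of_nonneg_left hinner hA0]
  rcases (add_nonneg (norm_nonneg (h t)) (norm_nonneg (h 0))).eq_or_lt with hzero | hpos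
  · have : 0 ≤ A * ‖w‖ := by positivity
    linarith [norm_nonneg (h 0)]
  · linarith [le_of_mul_le_mul_left hfactor hpos]

lemma tendsto_tangentialPart (hrun : IsTangentialAscent w α h) (ha : 0 < a) (hα : ∀ t, a ≤ α t)
    (hA : ∀ t, α t ≤ A) :
    Tendsto (fun t => tangentialPart (h t) w) atTop (nhds 0) := by
  have hα0 : ∀ t, 0 ≤ α t := fun t => ha.le.trans (hα t)
  have hbdd : BddAbove (Set.range fun t => ⟪h t, w⟫) := by
    refine ⟨(‖h 0‖ + A * ‖w‖) * ‖w‖, Set.forall_mem_range.mpr fun t => ?_⟩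
    exact (real_inner_le_norm _ _).trans (by gcongr; exact hrun.norm_le hα0 hA t)
  have hlim := tendsto_atTop_ciSup (hrun.monotone_inner hα0) hbdd
  have hincr : Tendsto (fun t => (⟪h (t + 1), w⟫ - ⟪h t, w⟫) / a) atTop (nhds 0) := by
    simpa using ((hlim.comp (tendsto_add_atTop_nat 1)).sub hlim).div_const a
  have hsq : Tendsto (fun t => ‖tangentialPart (h t) w‖ ^ 2) atTop (nhds 0) := by
    refine squeeze_zero (fun t => sq_nonneg _) (fun t => ?_) hincr
    rw [hrun.inner_succ_sub_inner, le_div_iff₀' ha]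
    gcongr
    exact hα t
  exact tendsto_zero_iff_norm_tendsto_zero.mpr (by simpa using hsq.sqrt)

lemma norm_mul_norm_tangentialPart_le (hrun : IsTangentialAscent w α h) (hα : ∀ t, 0 ≤ α t)
    (hinner : ∀ t, ⟪h t, w⟫ ≤ 0) (t : ℕ) :
    ‖h 0‖ * ‖tangentialPart (h 0) w‖ ≤ ‖h t‖ * ‖tangentialPart (h t) w‖ := by
  refine monotone_nat_of_le_succ (f := fun t => ‖h t‖ * ‖tangentialPart (h t) w‖) (fun t => ?_)
    t.zero_le
  rw [hrun t]
  exact norm_mul_norm_tangentialPart_le_add_smul (hα t) (hinner t)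

lemma eventually_inner_nonneg (hrun : IsTangentialAscent w α h) (ha : 0 < a) (hα : ∀ t, a ≤ α t)
    (hA : ∀ t, α t ≤ A) (hcos : -(‖h 0‖ * ‖w‖) < ⟪h 0, w⟫) :
    ∀ᶠ t in atTop, 0 ≤ ⟪h t, w⟫ := by
  have hα0 : ∀ t, 0 ≤ α t := fun t => ha.le.trans (hα t)
  suffices hex : ∃ t, 0 ≤ ⟪h t, w⟫ by
    obtain ⟨t, ht⟩ := hex
    filter_upwards [eventually_ge_atTop t] with s hs using ht.trans (hrun.monotone_inner hα0 hs)
  by_contra! hneg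
  have hh : h 0 ≠ 0 := fun hzero => by simpa [hzero] using hneg 0
  have hT : tangentialPart (h 0) w ≠ 0 :=
    tangentialPart_ne_zero_of_abs_inner_lt (abs_lt.mpr ⟨hcos, (hneg 0).trans_le (by positivity)⟩)
  have hlim : Tendsto (fun t => (‖h 0‖ + A * ‖w‖) * ‖tangentialPart (h t) w‖) atTop (nhds 0) := by
    simpa using (hrun.tendsto_tangentialPart ha hα hA).norm.const_mul (‖h 0‖ + A * ‖w‖)
  have hle : ‖h 0‖ * ‖tangentialPart (h 0) w‖ ≤ 0 := by
    refine ge_of_tendsto' hlim fun t => ?_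
    refine (hrun.norm_mul_norm_tangentialPart_le hα0 (fun s => (hneg s).le) t).trans ?_
    gcongr
    exact hrun.norm_le hα0 hA t
  have : 0 < ‖h 0‖ * ‖tangentialPart (h 0) w‖ := by positivity
  linarith

theorem tendsto_norm_normalized_sub (hrun : IsTangentialAscent w α h) (ha : 0 < a)
    (hα : ∀ t, a ≤ α t) (hA : ∀ t, α t ≤ A) (hcos : -(‖h 0‖ * ‖w‖) < ⟪h 0, w⟫) :
    Tendsto (fun t => ‖(‖h t‖⁻¹ • h t) - (‖w‖⁻¹ • w)‖) atTop (nhds 0) := by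
  have hw : w ≠ 0 := by rintro rfl; simp at hcos
  have h0 : h 0 ≠ 0 := fun hzero => by simp [hzero] at hcos
  have hlim : Tendsto (fun t => √2 * (‖tangentialPart (h t) w‖ / ‖w‖)) atTop (nhds 0) := by
    simpa using ((hrun.tendsto_tangentialPart ha hα hA).norm.div_const ‖w‖).const_mul √2
  refine squeeze_zero' (.of_forall fun t => norm_nonneg _) ?_ hlim
  filter_upwards [hrun.eventually_inner_nonneg ha hα hA hcos] with t ht
    using norm_normalized_sub_normalized_le (hrun.ne_zero h0 t) hw ht

theorem tendsto_norm_normalized_sub_of_div_norm {k ε : ℝ} {η : ℕ → ℝ}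
    (hrun : IsTangentialAscent w (fun t => k * η t / ‖h t‖) h) (hk : 0 < k) (hε : 0 < ε)
    (hη : ∀ t, ε ≤ η t) (hbdd : BddAbove (Set.range fun t => η t / ‖h t‖))
    (hcos : -(‖h 0‖ * ‖w‖) < ⟪h 0, w⟫) :
    Tendsto (fun t => ‖(‖h t‖⁻¹ • h t) - (‖w‖⁻¹ • w)‖) atTop (nhds 0) := by
  obtain ⟨B, hB⟩ := hbdd
  have h0 : h 0 ≠ 0 := fun hzero => by simp [hzero] at hcos
  have hpos : ∀ t, 0 < ‖h t‖ := fun t => norm_pos_iff.mpr (hrun.ne_zero h0 t)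
  have hη0 : ∀ t, 0 ≤ η t := fun t => hε.le.trans (hη t)
  have hα0 : ∀ t, 0 ≤ k * η t / ‖h t‖ := fun t =>
    div_nonneg (mul_nonneg hk.le (hη0 t)) (norm_nonneg _)
  have hαle : ∀ t, k * η t / ‖h t‖ ≤ k * B := fun t => by
    rw [mul_div_assoc]
    gcongr
    exact hB (Set.mem_range_self t)
  have hnorm : ∀ t, ‖h t‖ ≤ ‖h 0‖ + k * B * ‖w‖ := hrun.norm_le hα0 hαle
  have hR : 0 < ‖h 0‖ + k * B * ‖w‖ := (hpos 0).trans_le (hnorm 0)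
  have hαge : ∀ t, k * ε / (‖h 0‖ + k * B * ‖w‖) ≤ k * η t / ‖h t‖ := fun t => by
    have := hpos t
    have := hη0 t
    gcongr
    exacts [hη t, hnorm t]
  exact hrun.tendsto_norm_normalized_sub (by positivity) hαge hαle hcos

end IsTangentialAscent

theorem spherical_constrained_convergence_general
    {E : Type*} [NormedAddCommGroup E] [InnerProductSpace ℝ E] {C N : ℕ} {γ ε0 : ℝ}
    (hγ : -1 < γ) (hε0 : 0 < ε0) {w : Fin C → E} (hw : ∀ c, w c ≠ 0)
    {η : ℕ → ℝ} (hη : ∀ t, ε0 ≤ η t) {h : Fin N → Fin C → ℕ → E} (h0 : ∀ i c, h i c 0 ≠ 0)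
    (hcos : ∀ i c, ⟪w c, h i c 0⟫ / (‖w c‖ * ‖h i c 0‖) > -1)
    (hrec : ∀ (i : Fin N) (c : Fin C) (t : ℕ),
      h i c (t + 1) = h i c t +
        ((1 + γ) * η t / ((C : ℝ) * N * ‖h i c t‖)) •
          (w c - (⟪h i c t, w c⟫ / ‖h i c t‖ ^ 2) • h i c t))
    (hbdd : ∀ i c, BddAbove (Set.range fun t => η t / ‖h i c t‖)) :
    (∀ (i : Fin N) (c : Fin C),
      (∀ t, h i c t ≠ 0) ∧
      Tendsto (fun t => ‖(‖h i c t‖⁻¹ • h i c t) - (‖w c‖⁻¹ • w c)‖) atTop (nhds 0)) ∧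
    Tendsto
      (fun t => Real.sqrt (∑ i : Fin N, ∑ c : Fin C,
        ‖(‖h i c t‖⁻¹ • h i c t) - (‖w c‖⁻¹ • w c)‖ ^ 2))
      atTop (nhds 0) := by
  have hrun : ∀ i c, IsTangentialAscent (w c)
      (fun t => (1 + γ) / ((C : ℝ) * N) * η t / ‖h i c t‖) (h i c) := fun i c t => by
    simp only [hrec i c t, tangentialPart, div_mul_eq_mul_div, div_div]
  have hlim : ∀ i c,
      Tendsto (fun t => ‖(‖h i c t‖⁻¹ • h i c t) - (‖w c‖⁻¹ • w c)‖) atTop (nhds 0) := by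
    intro i c
    have hk : 0 < (1 + γ) / ((C : ℝ) * N) :=
      div_pos (by linarith) (mul_pos (Nat.cast_pos.mpr c.pos) (Nat.cast_pos.mpr i.pos))
    refine (hrun i c).tendsto_norm_normalized_sub_of_div_norm hk hε0 hη (hbdd i c) ?_
    have hnorm : 0 < ‖w c‖ * ‖h i c 0‖ :=
      mul_pos (norm_pos_iff.mpr (hw c)) (norm_pos_iff.mpr (h0 i c))
    have := (lt_div_iff₀ hnorm).mp (hcos i c)
    rwa [neg_one_mul, real_inner_comm, mul_comm] at this
  refine ⟨fun i c => ⟨(hrun i c).ne_zero (h0 i c), hlim i c⟩, ?_⟩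
  simpa using (tendsto_finsetSum Finset.univ fun i _ =>
    tendsto_finsetSum Finset.univ fun c _ => (hlim i c).pow 2).sqrt

/-- **Convergence in the spherical constrained case (prototype-anchored features).**
Under gradient descent of the spherically constrained unhinged objective with fixed
prototypes `w c`, every normalized feature `h i c (t)/‖h i c (t)‖` converges to the
normalized prototype `w c/‖w c‖`; equivalently, the matrix of normalized features
converges (in Frobenius distance) to the matrix of normalized prototypes. -/
theorem spherical_constrained_convergence
    (C N p : ℕ) (hC : 1 ≤ C) (hN : 1 ≤ N) (hp : 1 ≤ p)
    (γ : ℝ) (hγ : 0 < γ)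
    (ε0 : ℝ) (hε0 : 0 < ε0)
    (w : Fin C → EuclideanSpace ℝ (Fin p)) (hw : ∀ c, w c ≠ 0)
    (η : ℕ → ℝ) (hη : ∀ t, ε0 ≤ η t)
    (hηratio : Tendsto (fun t => η (t + 1) / η t) atTop (nhds 1))
    (h : Fin N → Fin C → ℕ → EuclideanSpace ℝ (Fin p))
    (h0 : ∀ i c, h i c 0 ≠ 0)
    (hcos : ∀ i c, ⟪w c, h i c 0⟫ / (‖w c‖ * ‖h i c 0‖) > -1)
    (hrec : ∀ (i : Fin N) (c : Fin C) (t : ℕ),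
      h i c (t + 1) = h i c t +
        ((1 + γ) * η t / ((C : ℝ) * N * ‖h i c t‖)) •
          (w c - (⟪h i c t, w c⟫ / ‖h i c t‖ ^ 2) • h i c t))
    (hmono : ∀ i c, Antitone fun t => η t / ‖h i c t‖)
    (hinit : ∀ i c, (1 + γ) * η 0 * ‖w c‖ / ((C : ℝ) * N) ≤ ‖h i c 0‖ ^ 2) :
    (∀ (i : Fin N) (c : Fin C),
      (∀ t, h i c t ≠ 0) ∧
      Tendsto (fun t => ‖(‖h i c t‖⁻¹ • h i c t) - (‖w c‖⁻¹ • w c)‖) atTop (nhds 0)) ∧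
    Tendsto
      (fun t => Real.sqrt (∑ i : Fin N, ∑ c : Fin C,
        ‖(‖h i c t‖⁻¹ • h i c t) - (‖w c‖⁻¹ • w c)‖ ^ 2))
      atTop (nhds 0) :=
  spherical_constrained_convergence_general (by linarith) hε0 hw hη h0 hcos hrec fun i c =>
    ⟨_, Set.forall_mem_range.mpr fun t => hmono i c t.zero_le⟩
end
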